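/- arXiv:1505.08033 — 2 statements merged into one kernel-verified Lean document; each statement's English description precedes it below -/
import Mathlib

section
/- Let σ be a diagonal measure on X^d. If the set of x₁ ∈ X which are compatible with σ has positive Lebesgue measure μ, then σ is a graph joining arising from powers of T. -/
open MeasureTheory Set
open scoped ENNReal NNReal Classical

noncomputable section

/-- Heights of the towers of the infinite Chacon transformation
(tower `0` is `[0,1)` with a single level, so `chaconH 1 = 8`). -/
def chaconH : ℕ → ℕ
  | 0 => 1
  | n + 1 => 2 * (3 * chaconH n + 1)

/-- Left endpoint of level `k` of tower `n`.  At step `n+1`, tower `n` (which fills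
`[0, hₙ·3⁻ⁿ)`) is cut into three subcolumns of equal width; one spacer is added above the
middle subcolumn and `3hₙ+1` spacers above the third one, the spacers being taken
successively as the leftmost intervals of length `3⁻⁽ⁿ⁺¹⁾` in the unused part of `ℝ₊`;
then the three subcolumns are stacked left under right. -/
def chaconL : ℕ → ℕ → ℝ
  | 0, _ => 0
  | n + 1, k =>
      if k < chaconH n then chaconL n k
      else if k < 2 * chaconH n then chaconL n (k - chaconH n) + (3 : ℝ)⁻¹ ^ (n + 1)
      else if k = 2 * chaconH n then (chaconH n : ℝ) * (3 : ℝ)⁻¹ ^ n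
      else if k ≤ 3 * chaconH n then
        chaconL n (k - 2 * chaconH n - 1) + 2 * (3 : ℝ)⁻¹ ^ (n + 1)
      else (chaconH n : ℝ) * (3 : ℝ)⁻¹ ^ n
        + ((k : ℝ) - 3 * (chaconH n : ℝ)) * (3 : ℝ)⁻¹ ^ (n + 1)

/-- Level `k` of tower `n`: an interval of length `3⁻ⁿ`, closed to the left and open to
the right. -/
def chaconLevel (n k : ℕ) : Set ℝ := Ico (chaconL n k) (chaconL n k + (3 : ℝ)⁻¹ ^ n)

/-- The Chacon transformation on `ℝ`: each point of a non-top level of some tower is sent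
to the point directly above it (the value does not depend on the choice of the tower). -/
def chaconT0 (x : ℝ) : ℝ :=
  if h : ∃ p : ℕ × ℕ, p.2 + 1 < chaconH p.1 ∧ x ∈ chaconLevel p.1 p.2 then
    x - chaconL h.choose.1 h.choose.2 + chaconL h.choose.1 (h.choose.2 + 1)
  else x

/-- The inverse of the Chacon transformation on `ℝ`. -/
def chaconT0inv (x : ℝ) : ℝ :=
  if h : ∃ p : ℕ × ℕ, p.2 + 1 < chaconH p.1 ∧ x ∈ chaconLevel p.1 (p.2 + 1) then
    x - chaconL h.choose.1 (h.choose.2 + 1) + chaconL h.choose.1 h.choose.2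
  else x

/-- The space `X = ℝ₊`. -/
abbrev ChaconX : Type := ↥(Set.Ici (0 : ℝ))

/-- The infinite Chacon transformation `T` on `X = ℝ₊`. -/
def chaconT (x : ChaconX) : ChaconX :=
  ⟨max 0 (chaconT0 (x : ℝ)), Set.mem_Ici.mpr (le_max_left 0 _)⟩

/-- The inverse `T⁻¹` of the Chacon transformation on `X = ℝ₊`. -/
def chaconTinv (x : ChaconX) : ChaconX :=
  ⟨max 0 (chaconT0inv (x : ℝ)), Set.mem_Ici.mpr (le_max_left 0 _)⟩

/-- Integer powers `T^j` of the Chacon transformation. -/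
def chaconTZ (j : ℤ) : ChaconX → ChaconX :=
  if 0 ≤ j then chaconT^[j.toNat] else chaconTinv^[(-j).toNat]

/-- Lebesgue measure `μ` on `X = ℝ₊`. -/
def chaconMu : Measure ChaconX := volume.comap Subtype.val

/-- `C n`: the bottom half of tower `n` (its lowest `hₙ/2` levels), as a subset of `X`. -/
def chaconC (n : ℕ) : Set ChaconX :=
  {x | ∃ k, k < chaconH n / 2 ∧ (x : ℝ) ∈ chaconLevel n k}

/-- `tₙ x ∈ {1,2,3}`: the subcolumn of tower `n` containing `x`
(junk value `0` if `x` is not in tower `n`). -/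
def chaconTn (n : ℕ) (x : ChaconX) : ℕ :=
  if h : ∃ k, k < chaconH n ∧ (x : ℝ) ∈ chaconLevel n k then
    1 + (⌊((x : ℝ) - chaconL n h.choose) * (3 : ℝ) ^ (n + 1)⌋).toNat
  else 0

/-- The Cartesian power `T^{×ι}` of the Chacon transformation, acting coordinatewise. -/
def chaconTd (ι : Type) (x : ι → ChaconX) : ι → ChaconX := fun i => chaconT (x i)

/-- Integer powers `(T^{×ι})^j`, acting coordinatewise. -/
def chaconTdZ (ι : Type) (j : ℤ) (x : ι → ChaconX) : ι → ChaconX := fun i => chaconTZ j (x i)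

/-- `Cₙ^ι ⊆ X^ι`. -/
def chaconCd (ι : Type) (n : ℕ) : Set (ι → ChaconX) := {x | ∀ i, x i ∈ chaconC n}

/-- An `n`-box: a Cartesian product of levels of `C n`. -/
def IsNBox (ι : Type) (n : ℕ) (B : Set (ι → ChaconX)) : Prop :=
  ∃ k : ι → ℕ, (∀ i, k i < chaconH n / 2) ∧
    B = {x : ι → ChaconX | ∀ i, ((x i : ℝ)) ∈ chaconLevel n (k i)}

/-- An `n`-diagonal: a maximal finite family of `n`-boxes `B, T^{×d}B, …, (T^{×d})^ℓ B`,
regarded as the union of its boxes. -/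
def IsNDiagonal (ι : Type) (n : ℕ) (D : Set (ι → ChaconX)) : Prop :=
  ∃ (B : Set (ι → ChaconX)) (ℓ : ℕ),
    (∀ j : ℕ, j ≤ ℓ → IsNBox ι n (chaconTdZ ι (j : ℤ) '' B)) ∧
    ¬ chaconTdZ ι (-1) '' B ⊆ chaconCd ι n ∧
    ¬ chaconTdZ ι ((ℓ : ℤ) + 1) '' B ⊆ chaconCd ι n ∧
    D = ⋃ j ∈ Finset.range (ℓ + 1), chaconTdZ ι (j : ℤ) '' B

/-- A measure is boundedly finite if bounded (measurable) sets have finite measure. -/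
def BoundedlyFinite {α : Type*} [MeasurableSpace α] [PseudoMetricSpace α]
    (σ : Measure α) : Prop :=
  ∀ A : Set α, MeasurableSet A → Bornology.IsBounded A → σ A < ⊤

/-- Diagonal measures on `X^ι`: boundedly finite, `T^{×ι}`-invariant measures which are,
for every large enough `n`, concentrated on a single `n`-diagonal inside `Cₙ^ι`. -/
def IsDiagonalMeasure (ι : Type) [Fintype ι] (σ : Measure (ι → ChaconX)) : Prop :=
  BoundedlyFinite σ ∧ σ.map (chaconTd ι) = σ ∧
    ∃ n₀ : ℕ, 1 ≤ n₀ ∧ ∀ n, n₀ ≤ n →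
      ∃ D : Set (ι → ChaconX), IsNDiagonal ι n D ∧ σ (chaconCd ι n \ D) = 0

/-- A wandering set for the `ℤ`-action `Uz`. -/
def ZWandering {α : Type*} (Uz : ℤ → α → α) (W : Set α) : Prop :=
  ∀ j k : ℤ, j ≠ k → Disjoint (Uz j '' W) (Uz k '' W)

/-- Conservativity: every measurable wandering set is null. -/
def ZConservative {α : Type*} [MeasurableSpace α] (σ : Measure α) (Uz : ℤ → α → α) : Prop :=
  ∀ W : Set α, MeasurableSet W → ZWandering Uz W → σ W = 0

/-- Total dissipativity: mod `σ`, the space is the disjoint union of the iterates of a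
wandering set. -/
def ZTotallyDissipative {α : Type*} [MeasurableSpace α] (σ : Measure α)
    (Uz : ℤ → α → α) : Prop :=
  ∃ W : Set α, MeasurableSet W ∧ ZWandering Uz W ∧ σ ((⋃ j : ℤ, Uz j '' W)ᶜ) = 0

/-- Ergodicity of a (not necessarily finite) invariant measure: every invariant
measurable set is null or conull. -/
def MeasErgodic {α : Type*} [MeasurableSpace α] (σ : Measure α) (U : α → α) : Prop :=
  ∀ A : Set α, MeasurableSet A → U ⁻¹' A = A → σ A = 0 ∨ σ Aᶜ = 0

/-- `Icc a b` is an `n`-crossing for `x`: a maximal finite set of consecutive integers `j`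
with `(T^{×ι})^j x ∈ Cₙ^ι`. -/
def IsCrossing (ι : Type) (n : ℕ) (x : ι → ChaconX) (a b : ℤ) : Prop :=
  a ≤ b ∧ (∀ j : ℤ, a ≤ j → j ≤ b → chaconTdZ ι j x ∈ chaconCd ι n) ∧
    chaconTdZ ι (a - 1) x ∉ chaconCd ι n ∧ chaconTdZ ι (b + 1) x ∉ chaconCd ι n

/-- `n(x)`: the smallest `n ≥ 1` with `x ∈ Cₙ^ι`. -/
def chaconNOf (ι : Type) (x : ι → ChaconX) : ℕ :=
  if h : ∃ n : ℕ, 1 ≤ n ∧ x ∈ chaconCd ι n then Nat.find h else 0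

/-- `B(τ)`: the points of `B` whose coordinate `i` lies in subcolumn `τ i` of tower `n`. -/
def chaconBoxTau (ι : Type) (n : ℕ) (B : Set (ι → ChaconX)) (τ : ι → ℕ) :
    Set (ι → ChaconX) :=
  {x ∈ B | ∀ i, chaconTn n (x i) = τ i}

/-- The transition from the `n`-diagonal `D` to the `(n+1)`-diagonal `D'` is the central
one, i.e. `D' = D(1,…,1)`. -/
def CentralTransition (ι : Type) (n : ℕ) (D D' : Set (ι → ChaconX)) : Prop :=
  ∀ B : Set (ι → ChaconX), IsNBox ι n B → B ⊆ D →
    chaconBoxTau ι n B (fun _ => 1) ⊆ D'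

/-- The `n`-diagonal containing a given set (junk value `∅` if there is none). -/
def diagOfBox (ι : Type) (n : ℕ) (B : Set (ι → ChaconX)) : Set (ι → ChaconX) :=
  if h : ∃ D, IsNDiagonal ι n D ∧ B ⊆ D then h.choose else ∅

/-- `D(τ)`: the `(n+1)`-diagonal containing `B(τ)` for an `n`-box `B ⊆ D`. -/
def diagTau (ι : Type) (n : ℕ) (D : Set (ι → ChaconX)) (τ : ι → ℕ) : Set (ι → ChaconX) :=
  if h : ∃ B, IsNBox ι n B ∧ B ⊆ D then diagOfBox ι (n + 1) (chaconBoxTau ι n h.choose τ)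
  else ∅

/-- A consistent family of diagonals `(Dₙ)_{n ≥ n₀}`. -/
def IsConsistentFamily (ι : Type) (n₀ : ℕ) (D : ℕ → Set (ι → ChaconX)) : Prop :=
  (∀ n, n₀ ≤ n → IsNDiagonal ι n (D n)) ∧
    (chaconCd ι (n₀ - 1) ∩ ⋂ n, ⋂ (_ : n₀ ≤ n), D n).Nonempty ∧
    ∀ n, n₀ ≤ n → D (n + 1) ∩ chaconCd ι n ⊆ D n

/-- `x` is seen by the family of diagonals `(Dₙ)_{n ≥ n₀}`. -/
def SeenByFam (ι : Type) (n₀ : ℕ) (D : ℕ → Set (ι → ChaconX)) (x : ι → ChaconX) : Prop :=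
  ∀ n, n₀ ≤ n → x ∉ chaconCd ι n ∨ x ∈ D n

/-- Graph joinings arising from powers of `T`:
`σ(A₁ × ⋯ × A_d) = α μ(T^{-k₁}A₁ ∩ ⋯ ∩ T^{-k_d}A_d)` for some `0 < α < ∞`. -/
def IsGraphJoining (ι : Type) [Fintype ι] (σ : Measure (ι → ChaconX)) : Prop :=
  ∃ (α : ℝ≥0∞) (k : ι → ℤ), 0 < α ∧ α ≠ ⊤ ∧
    ∀ A : ι → Set ChaconX, (∀ i, MeasurableSet (A i)) →
      σ (Set.univ.pi A) = α * chaconMu (⋂ i, chaconTZ (k i) ⁻¹' A i)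

/-- Ergodic components of `σ`: the nonzero boundedly finite `T^{×ι}`-invariant ergodic
measures, absolutely continuous with respect to `σ`, which appear in its ergodic
decomposition. -/
def IsErgodicComponent (ι : Type) [Fintype ι] (σ ρ : Measure (ι → ChaconX)) : Prop :=
  ρ ≠ 0 ∧ BoundedlyFinite ρ ∧ ρ.map (chaconTd ι) = ρ ∧ MeasErgodic ρ (chaconTd ι) ∧ ρ ≪ σ

end

/-!
A diagonal of level `n` is described by the offsets `δₙ i = kᵢ - k_z` of its levels relative to a
fixed coordinate `z`.  Passing from tower `n` to tower `n + 1` changes the level of `xᵢ` by the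
height at which the subcolumn of `xᵢ`, given by a base-`3` digit, is stacked.  The heights
`0, hₙ, 2hₙ + 1` have pairwise distinct nonzero differences, so if `δₙ₊₁ ≠ δₙ` then the `n`-th
digit of `x_z` is the same for all points lying in both diagonals.  If this occurred infinitely
often, the points `x_z` compatible with the family would have infinitely many prescribed digits and
form a null set.  Hence `δₙ` is eventually a constant `δ`, and every point seen by the family
satisfies `xᵢ = T^(δᵢ - δ_q) x_q`, where `q` minimizes `δ`.  The projection of `σ` to coordinate `q`
is a `T`-invariant measure that is finite on the levels of some tower.  Invariance forces it to
charge the levels of a tower equally, so it is a multiple of `μ`.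
-/

open Filter

lemma measurable_of_eqOn_iUnion {α β κ : Type*} [MeasurableSpace α] [MeasurableSpace β]
    [Countable κ] {f : α → β} {t : κ → Set α} {g : κ → α → β} (ht : ∀ i, MeasurableSet (t i))
    (hcover : ⋃ i, t i = univ) (hg : ∀ i, Measurable (g i)) (hfg : ∀ i, EqOn f (g i) (t i)) :
    Measurable f := by
  intro A hA
  have hpre : f ⁻¹' A = ⋃ i, t i ∩ g i ⁻¹' A := by
    ext x
    obtain ⟨i, hi⟩ := mem_iUnion.1 (hcover.ge (mem_univ x))
    simp only [mem_preimage, mem_iUnion, mem_inter_iff]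
    exact ⟨fun h => ⟨i, hi, hfg i hi ▸ h⟩, fun ⟨j, hj, h⟩ => (hfg j hj).symm ▸ h⟩
  rw [hpre]
  exact .iUnion fun i => (ht i).inter (hg i hA)

section Triadic

variable {n : ℕ} {x y : ChaconX}

/-- The index `c` of the triadic interval `[c·3⁻ⁿ, (c+1)·3⁻ⁿ)` containing `x`. -/
noncomputable def triadicIndex (n : ℕ) (x : ChaconX) : ℕ := ⌊(x : ℝ) * 3 ^ n⌋₊

/-- The `(n+1)`-st digit of `x` after the point in base `3`.  For `x` in tower `n` it is the
subcolumn of `x`, counted from `0` (`chaconTn` counts subcolumns from `1`). -/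
noncomputable def triadicDigit (n : ℕ) (x : ChaconX) : Fin 3 := Fin.ofNat 3 (triadicIndex (n + 1) x)

lemma triadicIndex_eq_iff {c : ℕ} :
    triadicIndex n x = c ↔
      (x : ℝ) ∈ Ico (c * (3 : ℝ)⁻¹ ^ n) (c * (3 : ℝ)⁻¹ ^ n + (3 : ℝ)⁻¹ ^ n) := by
  have h3 : (0 : ℝ) < 3 ^ n := by positivity
  rw [triadicIndex, Nat.floor_eq_iff (mul_nonneg x.2 h3.le), mem_Ico, inv_pow, ← div_eq_mul_inv,
    div_le_iff₀ h3, ← one_div, ← add_div, lt_div_iff₀ h3]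

lemma triadicIndex_lt_iff {c : ℕ} : triadicIndex n x < c ↔ (x : ℝ) * 3 ^ n < c :=
  Nat.floor_lt (mul_nonneg x.2 (by positivity))

lemma triadicIndex_add_div (n p : ℕ) (x : ChaconX) :
    triadicIndex (n + p) x / 3 ^ p = triadicIndex n x := by
  rw [triadicIndex, triadicIndex, ← Nat.floor_div_natCast]
  congr 1
  push_cast
  rw [pow_add, ← mul_assoc, mul_div_cancel_right₀ _ (by positivity)]

lemma triadicIndex_succ (n : ℕ) (x : ChaconX) :
    triadicIndex (n + 1) x = 3 * triadicIndex n x + triadicDigit n x := by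
  rw [← triadicIndex_add_div n 1, pow_one]
  exact (Nat.div_add_mod _ 3).symm

lemma dist_lt_of_triadicIndex_eq (h : triadicIndex n x = triadicIndex n y) :
    dist x y < (3 : ℝ)⁻¹ ^ n := by
  have hx := triadicIndex_eq_iff.1 h
  have hy := triadicIndex_eq_iff.1 (rfl : triadicIndex n y = _)
  rw [Subtype.dist_eq, Real.dist_eq, abs_lt]
  constructor <;> linarith [hx.1, hx.2, hy.1, hy.2]

lemma eq_of_frequently_triadicIndex_eq
    (h : ∃ᶠ n in atTop, triadicIndex n x = triadicIndex n y) : x = y := by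
  have hlim := tendsto_pow_atTop_nhds_zero_of_lt_one (r := (3 : ℝ)⁻¹) (by norm_num) (by norm_num)
  refine eq_of_dist_eq_zero (dist_nonneg.antisymm' (le_of_forall_gt fun ε hε => ?_))
  obtain ⟨n, hn, hnε⟩ := (h.and_eventually (hlim.eventually_lt_const hε)).exists
  exact (dist_lt_of_triadicIndex_eq hn).trans hnε

lemma measurable_triadicIndex (n : ℕ) : Measurable (triadicIndex n) :=
  Nat.measurable_floor.comp (measurable_subtype_coe.mul_const _)

lemma chaconMu_triadicIndex_preimage (n : ℕ) (A : Set ℕ) :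
    chaconMu (triadicIndex n ⁻¹' A) = 3⁻¹ ^ n * Measure.count A := by
  have singleton_mass (c : ℕ) : chaconMu (triadicIndex n ⁻¹' {c}) = 3⁻¹ ^ n := by
    have hpre : triadicIndex n ⁻¹' {c} =
        Subtype.val ⁻¹' Ico (c * (3 : ℝ)⁻¹ ^ n) (c * (3 : ℝ)⁻¹ ^ n + (3 : ℝ)⁻¹ ^ n) :=
      ext fun _ => triadicIndex_eq_iff
    have hsub : Ico (c * (3 : ℝ)⁻¹ ^ n) (c * (3 : ℝ)⁻¹ ^ n + (3 : ℝ)⁻¹ ^ n) ⊆ Ici 0 :=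
      fun y hy => (by positivity : (0 : ℝ) ≤ c * (3 : ℝ)⁻¹ ^ n).trans hy.1
    rw [chaconMu, comap_subtype_coe_apply measurableSet_Ici, hpre, Subtype.image_preimage_coe,
      inter_eq_right.2 hsub, Real.volume_Ico, add_sub_cancel_left,
      ENNReal.ofReal_pow (by norm_num), ENNReal.ofReal_inv_of_pos (by norm_num)]
    norm_num
  have hmap : chaconMu.map (triadicIndex n) = (3⁻¹ ^ n : ℝ≥0∞) • Measure.count := by
    refine Measure.ext_iff_singleton.2 fun c => ?_
    rw [Measure.map_apply (measurable_triadicIndex n) (measurableSet_singleton c), singleton_mass,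
      Measure.smul_apply, Measure.count_singleton, smul_eq_mul, mul_one]
  rw [← Measure.map_apply (measurable_triadicIndex n) (.of_discrete), hmap, Measure.smul_apply,
    smul_eq_mul]

lemma chaconMu_inter_triadicDigit_eq (n : ℕ) (A : Set ℕ) (t : Fin 3) :
    chaconMu (triadicIndex n ⁻¹' A ∩ {x | triadicDigit n x = t}) =
      3⁻¹ * chaconMu (triadicIndex n ⁻¹' A) := by
  have hinj : Function.Injective fun c : ℕ => 3 * c + t := fun _ _ h => by grind
  have hpre : triadicIndex n ⁻¹' A ∩ {x | triadicDigit n x = t} =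
      triadicIndex (n + 1) ⁻¹' ((fun c => 3 * c + t) '' A) := by
    ext x
    simp only [mem_inter_iff, mem_preimage, mem_ofPred_eq, mem_image, triadicIndex_succ]
    constructor
    · rintro ⟨hA, rfl⟩
      exact ⟨_, hA, rfl⟩
    · rintro ⟨c, hA, hc⟩
      obtain rfl : c = triadicIndex n x := by omega
      exact ⟨hA, Fin.ext (by omega)⟩
  rw [hpre, chaconMu_triadicIndex_preimage, chaconMu_triadicIndex_preimage,
    Measure.count_injective_image hinj, pow_succ']
  ring

lemma chaconMu_triadicDigit_eq_on_finset (c : ℕ) (a : ℕ → Fin 3) (F : Finset ℕ) :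
    chaconMu {x | triadicIndex 0 x = c ∧ ∀ n ∈ F, triadicDigit n x = a n} = 3⁻¹ ^ F.card := by
  induction F using Finset.induction_on_max with
  | empty => simpa using! chaconMu_triadicIndex_preimage 0 {c}
  | insert m F hm ih =>
    have hpre : {x | triadicIndex 0 x = c ∧ ∀ n ∈ F, triadicDigit n x = a n} =
        triadicIndex m ⁻¹' {b | b / 3 ^ m = c ∧
          ∀ n ∈ F, Fin.ofNat 3 (b / 3 ^ (m - (n + 1))) = a n} := by
      have hdiv (x : ChaconX) {k : ℕ} (hk : k ≤ m) :
          triadicIndex m x / 3 ^ (m - k) = triadicIndex k x := by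
        rw [← triadicIndex_add_div k (m - k), Nat.add_sub_cancel' hk]
      ext x
      refine and_congr (by rw [← hdiv x m.zero_le, Nat.sub_zero]) (forall₂_congr fun n hn => ?_)
      rw [hdiv x (hm n hn), triadicDigit]
    have hinter : {x | triadicIndex 0 x = c ∧ ∀ n ∈ insert m F, triadicDigit n x = a n} =
        {x | triadicIndex 0 x = c ∧ ∀ n ∈ F, triadicDigit n x = a n} ∩
          {x | triadicDigit m x = a m} := by
      ext x
      simp only [Finset.forall_mem_insert, mem_inter_iff, mem_ofPred_eq]
      tauto
    rw [hinter, hpre, chaconMu_inter_triadicDigit_eq, ← hpre, ih,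
      Finset.card_insert_of_notMem fun h => (hm m h).false, pow_succ']

lemma chaconMu_triadicDigit_eq_on_infinite (a : ℕ → Fin 3) {S : Set ℕ} (hS : S.Infinite) :
    chaconMu {x | ∀ n ∈ S, triadicDigit n x = a n} = 0 := by
  have hnull (c : ℕ) :
      chaconMu {x | triadicIndex 0 x = c ∧ ∀ n ∈ S, triadicDigit n x = a n} = 0 := by
    have hlim : Tendsto (fun j : ℕ => (3⁻¹ : ℝ≥0∞) ^ j) atTop (nhds 0) :=
      ENNReal.tendsto_pow_atTop_nhds_zero_of_lt_one (by norm_num)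
    refine le_antisymm (ge_of_tendsto' hlim fun j => ?_) zero_le
    obtain ⟨F, hFS, rfl⟩ := hS.exists_subset_card_eq j
    rw [← chaconMu_triadicDigit_eq_on_finset c a F]
    exact measure_mono fun x hx => ⟨hx.1, fun n hn => hx.2 n (hFS hn)⟩
  have hcover : {x | ∀ n ∈ S, triadicDigit n x = a n} ⊆
      ⋃ c, {x | triadicIndex 0 x = c ∧ ∀ n ∈ S, triadicDigit n x = a n} :=
    fun x hx => mem_iUnion.2 ⟨triadicIndex 0 x, rfl, hx⟩
  exact measure_mono_null hcover (measure_iUnion_null hnull)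

lemma chaconMu_eventually_triadicDigit_eq (a : ℕ → Fin 3) {S : Set ℕ} (hS : S.Infinite) :
    chaconMu {x | ∀ᶠ n in atTop, n ∈ S → triadicDigit n x = a n} = 0 := by
  refine measure_mono_null (fun x hx => ?_) (measure_iUnion_null fun m =>
    chaconMu_triadicDigit_eq_on_infinite a (hS.sdiff (finite_Iio m)))
  obtain ⟨m, hm⟩ := eventually_atTop.1 hx
  exact mem_iUnion.2 ⟨m, fun n hn => hm n (not_lt.1 hn.2) hn.1⟩

end Triadic

section Towers

variable {n k : ℕ} {x : ChaconX}

/-- The integer `c` such that level `k` of tower `n` is `[c·3⁻ⁿ, (c+1)·3⁻ⁿ)`. -/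
def levelIndex : ℕ → ℕ → ℕ
  | 0, _ => 0
  | n + 1, k =>
      if k < chaconH n then 3 * levelIndex n k
      else if k < 2 * chaconH n then 3 * levelIndex n (k - chaconH n) + 1
      else if k = 2 * chaconH n then 3 * chaconH n
      else if k ≤ 3 * chaconH n then 3 * levelIndex n (k - 2 * chaconH n - 1) + 2
      else k

/-- The level of tower `n + 1` that is the bottom of subcolumn `t` of tower `n`. -/
def subcolumnBase (n : ℕ) : Fin 3 → ℕ := ![0, chaconH n, 2 * chaconH n + 1]

/-- Level `k` of tower `n` as a subset of `X = ℝ₊`. -/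
def towerLevel (n k : ℕ) : Set ChaconX := Subtype.val ⁻¹' chaconLevel n k

/-- Tower `n` occurs inside tower `N` as the block of `chaconH n` consecutive levels starting at
level `s`, translated horizontally by a constant. -/
def IsTowerCopy (n N s : ℕ) : Prop :=
  ∃ r : ℝ, ∀ k < chaconH n, k + s < chaconH N ∧ towerLevel N (k + s) ⊆ towerLevel n k ∧
    chaconL N (k + s) = chaconL n k + r

lemma six_pow_le_chaconH (n : ℕ) : 6 ^ n ≤ chaconH n := by
  induction n with
  | zero => exact le_rfl
  | succ n ih => rw [chaconH]; omega

lemma chaconH_pos (n : ℕ) : 0 < chaconH n :=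
  (Nat.pow_pos (by norm_num)).trans_le (six_pow_le_chaconH n)

lemma add_subcolumnBase_lt (hk : k < chaconH n) (t : Fin 3) :
    k + subcolumnBase n t < chaconH (n + 1) / 2 := by
  fin_cases t <;> simp [subcolumnBase, chaconH] <;> omega

lemma eq_of_subcolumnBase_sub_eq {t₀ t s₀ s : Fin 3} (ht : t₀ ≠ t)
    (h : (subcolumnBase n t : ℤ) - subcolumnBase n t₀ = subcolumnBase n s - subcolumnBase n s₀) :
    t₀ = s₀ := by
  have := chaconH_pos n
  fin_cases t₀ <;> fin_cases t <;> fin_cases s₀ <;> fin_cases s <;>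
    simp [subcolumnBase] at ht h ⊢ <;> omega

lemma levelIndex_add_subcolumnBase (hk : k < chaconH n) (t : Fin 3) :
    levelIndex (n + 1) (k + subcolumnBase n t) = 3 * levelIndex n k + t := by
  fin_cases t <;> simp [subcolumnBase, levelIndex] <;> grind

lemma chaconL_eq_levelIndex (n k : ℕ) : chaconL n k = levelIndex n k * (3 : ℝ)⁻¹ ^ n := by
  induction n generalizing k with
  | zero => simp [chaconL, levelIndex]
  | succ n ih =>
    rw [chaconL, levelIndex]
    split_ifs <;> simp only [ih, pow_succ] <;> push_cast <;> ring

lemma chaconL_add_subcolumnBase (hk : k < chaconH n) (t : Fin 3) :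
    chaconL (n + 1) (k + subcolumnBase n t) = chaconL n k + t * (3 : ℝ)⁻¹ ^ (n + 1) := by
  rw [chaconL_eq_levelIndex, chaconL_eq_levelIndex, levelIndex_add_subcolumnBase hk, pow_succ]
  push_cast
  ring

lemma exists_levelIndex_eq {c : ℕ} (hc : c < chaconH n) : ∃ k < chaconH n, levelIndex n k = c := by
  induction n generalizing c with
  | zero => exact ⟨0, hc.trans_le' c.zero_le, (Nat.lt_one_iff.1 hc).symm⟩
  | succ n ih =>
    have hsucc : chaconH (n + 1) = 2 * (3 * chaconH n + 1) := rfl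
    rcases lt_trichotomy c (3 * chaconH n) with h | rfl | h
    · obtain ⟨k, hk, hkc⟩ := ih (c := c / 3) (by omega)
      refine ⟨k + subcolumnBase n (Fin.ofNat 3 c),
        (add_subcolumnBase_lt hk _).trans_le (Nat.div_le_self _ _), ?_⟩
      rw [levelIndex_add_subcolumnBase hk, hkc]
      exact Nat.div_add_mod c 3
    · have := chaconH_pos n
      refine ⟨2 * chaconH n, by omega, ?_⟩
      rw [levelIndex, if_neg (by omega), if_neg (by omega), if_pos rfl]
    · refine ⟨c, hc, ?_⟩
      rw [levelIndex, if_neg (by omega), if_neg (by omega), if_neg (by omega), if_neg (by omega)]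

lemma levelIndex_lt (hk : k < chaconH n) : levelIndex n k < chaconH n := by
  induction n generalizing k with
  | zero => exact one_pos
  | succ n ih =>
    rw [chaconH] at hk ⊢
    rw [levelIndex]
    split_ifs <;> grind

lemma levelIndex_injOn (n : ℕ) : InjOn (levelIndex n) (Finset.range (chaconH n)) := by
  refine Finset.injOn_of_surjOn_of_card_le (levelIndex n) (fun k hk => ?_) (fun c hc => ?_) le_rfl
  · simpa using levelIndex_lt (by simpa using hk)
  · simpa using exists_levelIndex_eq (by simpa using hc)

lemma towerLevel_eq (n k : ℕ) : towerLevel n k = triadicIndex n ⁻¹' {levelIndex n k} := by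
  ext x
  rw [mem_preimage, mem_singleton_iff, triadicIndex_eq_iff, ← chaconL_eq_levelIndex]
  exact Iff.rfl

lemma mem_towerLevel_iff : x ∈ towerLevel n k ↔ triadicIndex n x = levelIndex n k := by
  rw [towerLevel_eq, mem_preimage, mem_singleton_iff]

lemma measurableSet_towerLevel (n k : ℕ) : MeasurableSet (towerLevel n k) :=
  measurable_subtype_coe measurableSet_Ico

lemma towerLevel_index_unique {k' : ℕ} (hk : k < chaconH n) (hk' : k' < chaconH n)
    (hx : x ∈ towerLevel n k) (hx' : x ∈ towerLevel n k') : k = k' :=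
  levelIndex_injOn n (by simpa using hk) (by simpa using hk')
    ((mem_towerLevel_iff.1 hx).symm.trans (mem_towerLevel_iff.1 hx'))

lemma mem_towerLevel_succ_iff (hk : k < chaconH n) {t : Fin 3} :
    x ∈ towerLevel (n + 1) (k + subcolumnBase n t) ↔ x ∈ towerLevel n k ∧ triadicDigit n x = t := by
  rw [mem_towerLevel_iff, mem_towerLevel_iff, triadicIndex_succ, levelIndex_add_subcolumnBase hk,
    Fin.ext_iff]
  omega

lemma exists_mem_towerLevel (hx : triadicIndex n x < chaconH n) :
    ∃ k < chaconH n, x ∈ towerLevel n k := by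
  simpa only [mem_towerLevel_iff, eq_comm] using exists_levelIndex_eq hx

lemma exists_isTowerCopy {N : ℕ} (hnN : n ≤ N) (hk : k < chaconH n) (hx : x ∈ towerLevel n k) :
    ∃ s, IsTowerCopy n N s ∧ x ∈ towerLevel N (k + s) := by
  induction N, hnN using Nat.le_induction with
  | base => exact ⟨0, ⟨0, fun _ hk' => ⟨hk', Subset.rfl, (add_zero _).symm⟩⟩, hx⟩
  | succ N _ ih =>
    obtain ⟨s, ⟨r, hs⟩, hxs⟩ := ih
    refine ⟨s + subcolumnBase N (triadicDigit N x),
      ⟨r + (triadicDigit N x : ℕ) * (3 : ℝ)⁻¹ ^ (N + 1), fun k' hk' => ?_⟩, ?_⟩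
    · obtain ⟨hlt, hsub, hL⟩ := hs k' hk'
      simp only [← add_assoc]
      refine ⟨(add_subcolumnBase_lt hlt _).trans_le (Nat.div_le_self _ _),
        fun y hy => hsub ((mem_towerLevel_succ_iff hlt).1 hy).1, ?_⟩
      rw [chaconL_add_subcolumnBase hlt, hL]
    · rw [← add_assoc]
      exact (mem_towerLevel_succ_iff (hs k hk).1).2 ⟨hxs, rfl⟩

lemma mem_chaconC_succ (hk : k < chaconH n) (hx : x ∈ towerLevel n k) : x ∈ chaconC (n + 1) :=
  ⟨_, add_subcolumnBase_lt hk _, (mem_towerLevel_succ_iff hk).2 ⟨hx, rfl⟩⟩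

lemma eventually_triadicIndex_lt_chaconH (x : ChaconX) :
    ∀ᶠ n in atTop, triadicIndex n x < chaconH n := by
  obtain ⟨N, hN⟩ := pow_unbounded_of_one_lt (x : ℝ) one_lt_two
  refine eventually_atTop.2 ⟨N, fun n hn => triadicIndex_lt_iff.2 ?_⟩
  calc (x : ℝ) * 3 ^ n < 2 ^ n * 3 ^ n := by
        gcongr
        exact hN.trans_le (pow_le_pow_right₀ one_le_two hn)
    _ = (6 ^ n : ℕ) := by rw [← mul_pow]; norm_num
    _ ≤ chaconH n := mod_cast six_pow_le_chaconH n

lemma eventually_mem_chaconC (x : ChaconX) : ∀ᶠ n in atTop, x ∈ chaconC n := by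
  rw [← map_add_atTop_eq_nat 1, eventually_map]
  filter_upwards [eventually_triadicIndex_lt_chaconH x] with n hn
  obtain ⟨k, hk, hxk⟩ := exists_mem_towerLevel hn
  exact mem_chaconC_succ hk hxk

end Towers

section Dynamics

variable {n k j : ℕ} {x y : ChaconX}

lemma exists_mem_towerLevel_ge (x : ChaconX) (n : ℕ) :
    ∃ N ≥ n, ∃ k, k + 1 < chaconH N ∧ x ∈ towerLevel N k := by
  obtain ⟨N, hN, k, hk, hx⟩ :=
    ((eventually_ge_atTop n).and (eventually_mem_chaconC x)).exists
  exact ⟨N, hN, k, by omega, hx⟩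

lemma coe_chaconT (hk : k + 1 < chaconH n) (hx : x ∈ towerLevel n k) :
    (chaconT x : ℝ) = x - chaconL n k + chaconL n (k + 1) := by
  have hex : ∃ p : ℕ × ℕ, p.2 + 1 < chaconH p.1 ∧ (x : ℝ) ∈ chaconLevel p.1 p.2 := ⟨(n, k), hk, hx⟩
  obtain ⟨hq, hxq⟩ := hex.choose_spec
  have hT0 : chaconT0 x = x - chaconL n k + chaconL n (k + 1) := by
    rw [chaconT0, dif_pos hex]
    generalize hex.choose = q at hq hxq
    obtain ⟨s, ⟨r, hs⟩, hxs⟩ := exists_isTowerCopy (le_max_left n q.1) (Nat.lt_of_succ_lt hk) hx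
    obtain ⟨s', ⟨r', hs'⟩, hxs'⟩ :=
      exists_isTowerCopy (le_max_right n q.1) (Nat.lt_of_succ_lt hq) hxq
    have hindex : k + s = q.2 + s' :=
      towerLevel_index_unique (hs k (by omega)).1 (hs' q.2 (by omega)).1 hxs hxs'
    have hsucc : k + 1 + s = q.2 + 1 + s' := by omega
    have hL := (hs k (by omega)).2.2.symm.trans ((congrArg _ hindex).trans (hs' q.2 (by omega)).2.2)
    have hL1 := (hs _ hk).2.2.symm.trans ((congrArg _ hsucc).trans (hs' _ hq).2.2)
    linarith
  have hnonneg : 0 ≤ (x : ℝ) - chaconL n k + chaconL n (k + 1) := by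
    have : 0 ≤ chaconL n (k + 1) := by rw [chaconL_eq_levelIndex]; positivity
    linarith [hx.1]
  exact (congrArg (max 0) hT0).trans (max_eq_right hnonneg)

lemma chaconT_mem_towerLevel (hk : k + 1 < chaconH n) (hx : x ∈ towerLevel n k) :
    chaconT x ∈ towerLevel n (k + 1) := by
  rw [towerLevel, mem_preimage, coe_chaconT hk hx]
  constructor <;> linarith [hx.1, hx.2]

lemma iterate_chaconT_mem_towerLevel (hk : k + j < chaconH n) (hx : x ∈ towerLevel n k) :
    chaconT^[j] x ∈ towerLevel n (k + j) := by
  induction j with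
  | zero => exact hx
  | succ j ih =>
    rw [Function.iterate_succ_apply']
    exact chaconT_mem_towerLevel hk (ih (by omega))

lemma add_lt_of_iterate_mem_chaconC (hk : k < chaconH n) (hx : x ∈ towerLevel n k)
    (hC : ∀ m ≤ j, chaconT^[m] x ∈ chaconC n) : k + j < chaconH n / 2 := by
  induction j with
  | zero =>
    obtain ⟨k', hk', hx'⟩ := hC 0 le_rfl
    rwa [add_zero, towerLevel_index_unique hk (by omega) hx hx']
  | succ j ih =>
    have hlt := ih fun m hm => hC m (by omega)
    obtain ⟨k', hk', hx'⟩ := hC (j + 1) le_rfl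
    rwa [towerLevel_index_unique (by omega) (by omega)
      (iterate_chaconT_mem_towerLevel (by omega) hx) hx']

lemma chaconTZ_natCast (j : ℕ) : chaconTZ j = chaconT^[j] := by
  rw [chaconTZ, if_pos j.cast_nonneg, Int.toNat_natCast]

lemma chaconT_preimage_towerLevel (hk : k + 1 < chaconH n) :
    chaconT ⁻¹' towerLevel n (k + 1) = towerLevel n k := by
  refine Subset.antisymm (fun x hx => ?_) fun x hx => chaconT_mem_towerLevel hk hx
  obtain ⟨N, hN, j, hj, hxj⟩ := exists_mem_towerLevel_ge x n
  obtain ⟨s, ⟨_, hs⟩, hTs⟩ := exists_isTowerCopy hN hk hx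
  have hindex : j + 1 = k + 1 + s :=
    towerLevel_index_unique hj (hs _ hk).1 (chaconT_mem_towerLevel hj hxj) hTs
  obtain ⟨-, hsub, -⟩ := hs k (by omega)
  exact hsub (by rwa [show k + s = j by omega])

lemma measurable_chaconT : Measurable chaconT := by
  rw [← (MeasurableEmbedding.subtype_coe measurableSet_Ici).measurable_comp_iff]
  refine measurable_of_eqOn_iUnion (κ := {p : ℕ × ℕ // p.2 + 1 < chaconH p.1})
    (t := fun p => towerLevel p.1.1 p.1.2)
    (g := fun p x => x - chaconL p.1.1 p.1.2 + chaconL p.1.1 (p.1.2 + 1))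
    (fun _ => measurableSet_towerLevel _ _) (eq_univ_of_forall fun x => ?_)
    (fun _ => (measurable_subtype_coe.sub_const _).add_const _) fun p _ hx => coe_chaconT p.2 hx
  obtain ⟨N, -, k, hk, hx⟩ := exists_mem_towerLevel_ge x 0
  exact mem_iUnion.2 ⟨⟨(N, k), hk⟩, hx⟩

lemma eq_iterate_chaconT_of_frequently
    (h : ∃ᶠ n in atTop, ∃ k, k + j < chaconH n ∧ x ∈ towerLevel n k ∧ y ∈ towerLevel n (k + j)) :
    y = chaconT^[j] x :=
  eq_of_frequently_triadicIndex_eq <| h.mono fun _ ⟨_, hk, hx, hy⟩ =>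
    (mem_towerLevel_iff.1 hy).trans
      (mem_towerLevel_iff.1 (iterate_chaconT_mem_towerLevel hk hx)).symm

end Dynamics

section InvariantMeasure

variable {n k : ℕ} {ν : Measure ChaconX}

/-- The levels of all the towers, as subsets of `X`. -/
def towerLevels : Set (Set ChaconX) := {s | ∃ n, ∃ k < chaconH n, towerLevel n k = s}

lemma countable_towerLevels : towerLevels.Countable := by
  refine (countable_range fun p : ℕ × ℕ => towerLevel p.1 p.2).mono ?_
  rintro _ ⟨n, k, -, rfl⟩
  exact ⟨(n, k), rfl⟩

lemma sUnion_towerLevels : ⋃₀ towerLevels = univ := by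
  refine eq_univ_of_forall fun x => ?_
  obtain ⟨n, -, k, hk, hx⟩ := exists_mem_towerLevel_ge x 0
  exact ⟨_, ⟨n, k, by omega, rfl⟩, hx⟩

lemma isPiSystem_towerLevels : IsPiSystem towerLevels := by
  have nested {n m k j : ℕ} (hnm : n ≤ m) (hk : k < chaconH n) (hj : j < chaconH m)
      (hne : (towerLevel n k ∩ towerLevel m j).Nonempty) : towerLevel m j ⊆ towerLevel n k := by
    obtain ⟨x, hxk, hxj⟩ := hne
    obtain ⟨s, ⟨_, hs⟩, hxs⟩ := exists_isTowerCopy hnm hk hxk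
    obtain ⟨hlt, hsub, -⟩ := hs k hk
    rwa [towerLevel_index_unique hj hlt hxj hxs]
  rintro _ ⟨n, k, hk, rfl⟩ _ ⟨m, j, hj, rfl⟩ hne
  rcases le_total n m with hnm | hmn
  · exact ⟨m, j, hj, (inter_eq_right.2 (nested hnm hk hj hne)).symm⟩
  · exact ⟨n, k, hk, (inter_eq_left.2 (nested hmn hj hk (inter_comm _ _ ▸ hne))).symm⟩

lemma exists_towerLevel_subset_of_isOpen {U : Set ChaconX} (hU : IsOpen U) {x : ChaconX}
    (hx : x ∈ U) : ∃ s ∈ towerLevels, x ∈ s ∧ s ⊆ U := by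
  obtain ⟨ε, hε, hball⟩ := Metric.isOpen_iff.1 hU x hx
  have hlim := tendsto_pow_atTop_nhds_zero_of_lt_one (r := (3 : ℝ)⁻¹) (by norm_num) (by norm_num)
  obtain ⟨n, hnε, k, hk, hxk⟩ :=
    ((hlim.eventually_lt_const hε).and (eventually_mem_chaconC x)).exists
  refine ⟨_, ⟨n, k, by omega, rfl⟩, hxk, fun y hy => hball ?_⟩
  exact (dist_lt_of_triadicIndex_eq
    ((mem_towerLevel_iff.1 hy).trans (mem_towerLevel_iff.1 hxk).symm)).trans hnε

lemma generateFrom_towerLevels :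
    MeasurableSpace.generateFrom towerLevels = (inferInstance : MeasurableSpace ChaconX) := by
  refine le_antisymm (MeasurableSpace.generateFrom_le ?_) ?_
  · rintro _ ⟨n, k, -, rfl⟩
    exact measurableSet_towerLevel n k
  · rw [BorelSpace.measurable_eq (α := ChaconX)]
    refine MeasurableSpace.generateFrom_le fun U hU => ?_
    have hUnion : U = ⋃₀ {s ∈ towerLevels | s ⊆ U} := by
      refine Subset.antisymm (fun x hx => ?_) (sUnion_subset fun s hs => hs.2)
      obtain ⟨s, hs, hxs, hsU⟩ := exists_towerLevel_subset_of_isOpen hU hx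
      exact ⟨s, ⟨hs, hsU⟩, hxs⟩
    rw [hUnion]
    exact .sUnion (countable_towerLevels.mono (sep_subset _ _)) fun s hs =>
      MeasurableSpace.measurableSet_generateFrom hs.1

lemma chaconMu_towerLevel (n k : ℕ) : chaconMu (towerLevel n k) = 3⁻¹ ^ n := by
  rw [towerLevel_eq, chaconMu_triadicIndex_preimage, Measure.count_singleton, mul_one]

lemma measure_towerLevel_eq_bottom (hν : MeasurePreserving chaconT ν ν) (hk : k < chaconH n) :
    ν (towerLevel n k) = ν (towerLevel n 0) := by
  induction k with
  | zero => rfl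
  | succ k ih =>
    rw [← ih (by omega), ← chaconT_preimage_towerLevel hk,
      hν.measure_preimage (measurableSet_towerLevel _ _).nullMeasurableSet]

lemma measure_bottom_succ (hν : MeasurePreserving chaconT ν ν) (n : ℕ) :
    ν (towerLevel (n + 1) 0) = 3⁻¹ * ν (towerLevel n 0) := by
  have hsplit : towerLevel n 0 = ⋃ t, towerLevel (n + 1) (0 + subcolumnBase n t) := by
    ext x
    simp only [mem_iUnion, mem_towerLevel_succ_iff (chaconH_pos n), exists_and_left, exists_eq',
      and_true]
  have hdisj : Pairwise fun t t' => Disjoint (towerLevel (n + 1) (0 + subcolumnBase n t))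
      (towerLevel (n + 1) (0 + subcolumnBase n t')) := fun t t' htt' =>
    Set.disjoint_left.2 fun x hx hx' => htt' <|
      ((mem_towerLevel_succ_iff (chaconH_pos n)).1 hx).2.symm.trans
        ((mem_towerLevel_succ_iff (chaconH_pos n)).1 hx').2
  have hsum : ν (towerLevel n 0) = 3 * ν (towerLevel (n + 1) 0) := by
    rw [hsplit, measure_iUnion hdisj fun _ => measurableSet_towerLevel _ _, tsum_fintype,
      Finset.sum_congr rfl fun t _ => measure_towerLevel_eq_bottom hν
        ((add_subcolumnBase_lt (chaconH_pos n) t).trans_le (Nat.div_le_self _ _))]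
    simp
  rw [hsum, ENNReal.inv_mul_cancel_left (by norm_num) (by norm_num)]

lemma measure_towerLevel (hν : MeasurePreserving chaconT ν ν) (hk : k < chaconH n) :
    ν (towerLevel n k) = 3⁻¹ ^ n * ν (towerLevel 0 0) := by
  rw [measure_towerLevel_eq_bottom hν hk]
  clear hk
  induction n with
  | zero => rw [pow_zero, one_mul]
  | succ n ih => rw [measure_bottom_succ hν, ih, pow_succ', mul_assoc]

lemma exists_eq_smul_chaconMu (hν : MeasurePreserving chaconT ν ν)
    (hfin : ν (towerLevel n 0) ≠ ⊤) : ∃ α : ℝ≥0∞, α ≠ ⊤ ∧ ν = α • chaconMu := by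
  have hfin₀ : ν (towerLevel 0 0) ≠ ⊤ := by
    intro htop
    rw [measure_towerLevel hν (chaconH_pos n), htop] at hfin
    exact hfin (ENNReal.mul_top (by simp))
  refine ⟨ν (towerLevel 0 0), hfin₀, Measure.ext_of_generateFrom_of_cover_subset
    generateFrom_towerLevels.symm isPiSystem_towerLevels Subset.rfl countable_towerLevels
    sUnion_towerLevels ?_ ?_⟩ <;> rintro _ ⟨m, k, hk, rfl⟩
  · rw [measure_towerLevel hν hk]
    exact ENNReal.mul_ne_top (by finiteness) hfin₀
  · rw [measure_towerLevel hν hk, Measure.smul_apply, chaconMu_towerLevel, smul_eq_mul, mul_comm]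

end InvariantMeasure

section Diagonals

variable {ι : Type} {z : ι} {n : ℕ} {δ : ι → ℤ} {x y : ι → ChaconX}

/-- The union of the `n`-boxes whose levels `k` satisfy `k i - k z = δ i`: when nonempty, it is the
`n`-diagonal with offsets `δ` relative to the coordinate `z`. -/
def levelOffsetSet (n : ℕ) (z : ι) (δ : ι → ℤ) : Set (ι → ChaconX) :=
  {x | ∃ k : ι → ℕ, (∀ i, k i < chaconH n / 2 ∧ x i ∈ towerLevel n (k i)) ∧
    ∀ i, (k i : ℤ) - k z = δ i}

lemma IsNDiagonal.exists_subset_levelOffsetSet {D : Set (ι → ChaconX)} (hD : IsNDiagonal ι n D)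
    (z : ι) : ∃ δ, D ⊆ levelOffsetSet n z δ := by
  obtain ⟨B, ℓ, hbox, -, -, rfl⟩ := hD
  have hiterate (j : ℕ) : chaconTdZ ι j = fun x i => chaconT^[j] (x i) :=
    funext₂ fun x i => congrFun (chaconTZ_natCast j) (x i)
  simp only [hiterate] at hbox ⊢
  obtain ⟨k, hk, hB⟩ := hbox 0 ℓ.zero_le
  rw [show (fun (x : ι → ChaconX) i => chaconT^[0] (x i)) = id from rfl, image_id] at hB
  have hC {x : ι → ChaconX} (hx : x ∈ B) {j : ℕ} (hj : j ≤ ℓ) (i : ι) :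
      chaconT^[j] (x i) ∈ chaconC n := by
    obtain ⟨k', hk', hB'⟩ := hbox j hj
    exact ⟨k' i, hk' i, hB'.le (mem_image_of_mem _ hx) i⟩
  refine ⟨fun i => (k i : ℤ) - k z, iUnion₂_subset fun j hj => image_subset_iff.2 fun x hx =>
    ⟨fun i => k i + j, fun i => ?_, fun i => by push_cast; ring⟩⟩
  have hlt : k i + j < chaconH n / 2 := add_lt_of_iterate_mem_chaconC
    ((hk i).trans_le (Nat.div_le_self _ _)) (hB.le hx i) fun m hm =>
      hC hx (hm.trans (Finset.mem_range_succ_iff.1 hj)) i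
  exact ⟨hlt, iterate_chaconT_mem_towerLevel (by omega) (hB.le hx i)⟩

lemma sub_eq_subcolumnBase_sub {δ' : ι → ℤ} (hx : x ∈ levelOffsetSet n z δ)
    (hx' : x ∈ levelOffsetSet (n + 1) z δ') (i : ι) :
    δ' i - δ i =
      subcolumnBase n (triadicDigit n (x i)) - subcolumnBase n (triadicDigit n (x z)) := by
  obtain ⟨k, hk, hδ⟩ := hx
  obtain ⟨k', hk', hδ'⟩ := hx'
  have hindex (i : ι) : k' i = k i + subcolumnBase n (triadicDigit n (x i)) := by
    obtain ⟨hlt, hmem⟩ := hk i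
    obtain ⟨hlt', hmem'⟩ := hk' i
    have hlt : k i < chaconH n := by omega
    exact towerLevel_index_unique (by omega)
      ((add_subcolumnBase_lt hlt _).trans_le (Nat.div_le_self _ _)) hmem'
      ((mem_towerLevel_succ_iff hlt).2 ⟨hmem, rfl⟩)
  rw [← hδ', ← hδ, hindex i, hindex z]
  push_cast
  ring

lemma triadicDigit_eq_of_offset_ne {δ' : ι → ℤ} (hne : δ' ≠ δ)
    (hx : x ∈ levelOffsetSet n z δ ∩ levelOffsetSet (n + 1) z δ')
    (hy : y ∈ levelOffsetSet n z δ ∩ levelOffsetSet (n + 1) z δ') :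
    triadicDigit n (x z) = triadicDigit n (y z) := by
  obtain ⟨i, hi⟩ := Function.ne_iff.1 hne
  have hxi := sub_eq_subcolumnBase_sub hx.1 hx.2 i
  refine eq_of_subcolumnBase_sub_eq (t := triadicDigit n (x i)) (fun h => hi ?_)
    (hxi.symm.trans (sub_eq_subcolumnBase_sub hy.1 hy.2 i))
  rwa [h, sub_self, sub_eq_zero] at hxi

lemma eventuallyConst_of_chaconMu_pos {δ : ℕ → ι → ℤ}
    (hpos : 0 < chaconMu ((fun x => x z) '' {x | ∀ᶠ n in atTop, x ∈ levelOffsetSet n z (δ n)})) :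
    EventuallyConst δ atTop := by
  by_contra hconst
  have hinf : {n | δ (n + 1) ≠ δ n}.Infinite := by
    rw [← Nat.frequently_atTop_iff_infinite, frequently_atTop]
    simpa only [eventuallyConst_atTop_nat, not_exists, not_forall, exists_prop] using hconst
  have hdigit (n : ℕ) : ∃ a, n ∈ {n | δ (n + 1) ≠ δ n} → ∀ x ∈ levelOffsetSet n z (δ n) ∩
      levelOffsetSet (n + 1) z (δ (n + 1)), triadicDigit n (x z) = a := by
    rcases (levelOffsetSet n z (δ n) ∩ levelOffsetSet (n + 1) z (δ (n + 1))).eq_empty_or_nonempty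
      with hempty | ⟨y, hy⟩
    · exact ⟨0, fun _ x hx => absurd hx (hempty ▸ notMem_empty x)⟩
    · exact ⟨triadicDigit n (y z), fun hne x hx => triadicDigit_eq_of_offset_ne hne hx hy⟩
  choose a ha using hdigit
  refine hpos.ne' (measure_mono_null ?_ (chaconMu_eventually_triadicDigit_eq a hinf))
  rintro _ ⟨x, hx, rfl⟩
  filter_upwards [hx, (tendsto_add_atTop_nat 1).eventually hx] with n hn hn' hne
  exact ha n hne x ⟨hn, hn'⟩

end Diagonals

section GraphJoining

variable {ι : Type} {z q : ι} {n : ℕ} {x : ι → ChaconX}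

lemma eq_iterate_of_frequently_mem_levelOffsetSet {δ : ι → ℤ}
    (hx : ∃ᶠ n in atTop, x ∈ levelOffsetSet n z δ) (hq : ∀ i, δ q ≤ δ i) (i : ι) :
    x i = chaconT^[(δ i - δ q).toNat] (x q) := by
  refine eq_iterate_chaconT_of_frequently (hx.mono fun n hn => ?_)
  obtain ⟨k, hk, hδ⟩ := hn
  have hki : k i = k q + (δ i - δ q).toNat := by
    have := hδ i; have := hδ q; have := hq i
    omega
  have := (hk i).1
  exact ⟨k q, by omega, (hk q).2, hki ▸ (hk i).2⟩

lemma isBounded_towerLevel (n k : ℕ) : Bornology.IsBounded (towerLevel n k) :=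
  Metric.isBounded_iff.2 ⟨(3 : ℝ)⁻¹ ^ n, fun _ hx _ hy => (dist_lt_of_triadicIndex_eq
    ((mem_towerLevel_iff.1 hx).trans (mem_towerLevel_iff.1 hy).symm)).le⟩

lemma chaconC_eq_biUnion (n : ℕ) :
    chaconC n = ⋃ k ∈ Finset.range (chaconH n / 2), towerLevel n k := by
  ext x
  simp only [mem_iUnion₂, Finset.mem_range, exists_prop]
  exact Iff.rfl

variable {σ : Measure (ι → ChaconX)}

lemma eventually_mem_chaconCd [Finite ι] (x : ι → ChaconX) : ∀ᶠ n in atTop, x ∈ chaconCd ι n :=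
  eventually_all.2 fun i => eventually_mem_chaconC (x i)

lemma measurePreserving_map_eval (hinv : σ.map (chaconTd ι) = σ) (q : ι) :
    MeasurePreserving chaconT (σ.map (Function.eval q)) (σ.map (Function.eval q)) := by
  refine ⟨measurable_chaconT, ?_⟩
  have hTd : Measurable (chaconTd ι) :=
    measurable_pi_lambda _ fun i => measurable_chaconT.comp (measurable_pi_apply i)
  conv_rhs => rw [← hinv, Measure.map_map (measurable_pi_apply q) hTd]
  rw [Measure.map_map measurable_chaconT (measurable_pi_apply q)]
  rfl

variable [Fintype ι]

lemma BoundedlyFinite.measure_chaconCd_lt_top (hσ : BoundedlyFinite σ) (n : ℕ) :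
    σ (chaconCd ι n) < ⊤ := by
  have hpi : chaconCd ι n = univ.pi fun _ => chaconC n := by ext; exact mem_univ_pi.symm
  rw [hpi, chaconC_eq_biUnion]
  exact hσ _ (.univ_pi fun _ => Finset.measurableSet_biUnion _ fun k _ =>
      measurableSet_towerLevel n k)
    (.pi fun _ => (Bornology.isBounded_biUnion_finset _).2 fun k _ => isBounded_towerLevel n k)

lemma exists_measure_eval_bottom_ne_top (hbf : BoundedlyFinite σ) {k : ι → ℕ}
    (hgraph : ∀ᵐ x ∂σ, ∀ i, x i = chaconT^[k i] (x q)) :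
    ∃ n, σ.map (Function.eval q) (towerLevel n 0) ≠ ⊤ := by
  obtain ⟨n, hn⟩ : ∃ n, ∀ i, k i < chaconH n :=
    ⟨Finset.univ.sup k, fun i => ((Finset.le_sup (Finset.mem_univ i)).trans_lt
      (Nat.lt_pow_self (by norm_num))).trans_le (six_pow_le_chaconH _)⟩
  have hle : σ (Function.eval q ⁻¹' towerLevel n 0) ≤ σ (chaconCd ι (n + 1)) := by
    refine measure_mono_ae (hgraph.mono fun x hx hxq i => ?_)
    have hlt : 0 + k i < chaconH n := by rw [zero_add]; exact hn i
    rw [hx i]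
    exact mem_chaconC_succ hlt (iterate_chaconT_mem_towerLevel hlt hxq)
  refine ⟨n, ?_⟩
  rw [Measure.map_apply (measurable_pi_apply q) (measurableSet_towerLevel n 0)]
  exact (hle.trans_lt (hbf.measure_chaconCd_lt_top (n + 1))).ne

lemma isGraphJoining_of_ae_eq_iterate (hbf : BoundedlyFinite σ) (hinv : σ.map (chaconTd ι) = σ)
    (hσ : σ ≠ 0) {k : ι → ℕ} (hgraph : ∀ᵐ x ∂σ, ∀ i, x i = chaconT^[k i] (x q)) :
    IsGraphJoining ι σ := by
  have heval : Measurable (Function.eval q : (ι → ChaconX) → ChaconX) := measurable_pi_apply q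
  obtain ⟨n, hn⟩ := exists_measure_eval_bottom_ne_top hbf hgraph
  obtain ⟨α, hα, hν⟩ := exists_eq_smul_chaconMu (measurePreserving_map_eval hinv q) hn
  refine ⟨α, fun i => k i, pos_iff_ne_zero.2 ?_, hα, fun A hA => ?_⟩
  · rintro rfl
    rw [zero_smul, Measure.map_eq_zero_iff heval.aemeasurable] at hν
    exact hσ hν
  have hmeas : MeasurableSet (⋂ i, chaconTZ (k i) ⁻¹' A i) := .iInter fun i => by
    rw [chaconTZ_natCast]
    exact measurable_chaconT.iterate _ (hA i)
  calc σ (univ.pi A) = σ (Function.eval q ⁻¹' ⋂ i, chaconTZ (k i) ⁻¹' A i) := by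
        refine measure_congr (eventuallyEq_set.2 (hgraph.mono fun x hx => ?_))
        simp only [mem_univ_pi, mem_preimage, mem_iInter, chaconTZ_natCast, Function.eval, ← hx]
    _ = σ.map (Function.eval q) (⋂ i, chaconTZ (k i) ⁻¹' A i) :=
        (Measure.map_apply heval hmeas).symm
    _ = α * chaconMu (⋂ i, chaconTZ (k i) ⁻¹' A i) := by rw [hν, Measure.smul_apply, smul_eq_mul]

end GraphJoining

section Compatible

variable {ι : Type} {n₀ : ℕ} {D : ℕ → Set (ι → ChaconX)}

lemma ae_seenByFam {σ : Measure (ι → ChaconX)} (hD : ∀ n, n₀ ≤ n → σ (chaconCd ι n \ D n) = 0) :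
    ∀ᵐ x ∂σ, SeenByFam ι n₀ D x :=
  ae_all_iff.2 fun n => by
    by_cases hn : n₀ ≤ n
    · filter_upwards [measure_eq_zero_iff_ae_notMem.1 (hD n hn)] with x hx _
      exact not_or_of_imp fun hxC => by_contra fun hxD => hx ⟨hxC, hxD⟩
    · exact ae_of_all _ fun x h => absurd h hn

lemma SeenByFam.eventually_mem [Finite ι] {x : ι → ChaconX} (hx : SeenByFam ι n₀ D x) :
    ∀ᶠ n in atTop, x ∈ D n := by
  filter_upwards [eventually_mem_chaconCd x, eventually_ge_atTop n₀] with n hn hn₀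
  exact (hx n hn₀).resolve_left (not_not_intro hn)

end Compatible

theorem chacon_compatible_positive_general {ι : Type} [Fintype ι] (z : ι) (n₀ : ℕ)
    (σ : Measure (ι → ChaconX)) (hbf : BoundedlyFinite σ) (hinv : σ.map (chaconTd ι) = σ)
    (hσ : σ ≠ 0) (D : ℕ → Set (ι → ChaconX))
    (hD : ∀ n, n₀ ≤ n → IsNDiagonal ι n (D n) ∧ σ (chaconCd ι n \ D n) = 0)
    (hcomp : 0 < chaconMu {t | ∃ x : ι → ChaconX, x z = t ∧ SeenByFam ι n₀ D x}) :
    IsGraphJoining ι σ := by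
  obtain ⟨δ, hδ⟩ : ∃ δ : ℕ → ι → ℤ, ∀ᶠ n in atTop, D n ⊆ levelOffsetSet n z (δ n) :=
    ((eventually_ge_atTop n₀).mono fun n hn => (hD n hn).1.exists_subset_levelOffsetSet z).choice
  have hseen {x : ι → ChaconX} (hx : SeenByFam ι n₀ D x) :
      ∀ᶠ n in atTop, x ∈ levelOffsetSet n z (δ n) :=
    hδ.mp (hx.eventually_mem.mono fun _ hxD hsub => hsub hxD)
  have hconst : EventuallyConst δ atTop := eventuallyConst_of_chaconMu_pos
    (hcomp.trans_le (measure_mono fun t ⟨x, hxt, hx⟩ => ⟨x, hseen hx, hxt⟩))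
  obtain ⟨δ', hδ'⟩ := hconst.eventuallyEq_const
  have : Nonempty ι := ⟨z⟩
  obtain ⟨q, hq⟩ := Finite.exists_min δ'
  refine isGraphJoining_of_ae_eq_iterate (q := q) (k := fun i => (δ' i - δ' q).toNat) hbf hinv hσ ?_
  filter_upwards [ae_seenByFam fun n hn => (hD n hn).2] with x hx
  refine eq_iterate_of_frequently_mem_levelOffsetSet (z := z) (Eventually.frequently ?_) hq
  filter_upwards [hseen hx, hδ'] with n hn heq
  rwa [← heq]

/-- **Proposition (positive measure of compatible points).**  Let `σ` be a diagonal
measure on `X^d` (with charged diagonals `(Dₙ)_{n ≥ n₀}`).  If the set of `x₁ ∈ X` which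
are compatible with `σ` (i.e. which are the first coordinate of some point seen by `σ`)
has positive Lebesgue measure, then `σ` is a graph joining arising from powers of `T`. -/
theorem chacon_compatible_positive (d n₀ : ℕ) (hd : 0 < d)
    (σ : Measure (Fin d → ChaconX)) (hbf : BoundedlyFinite σ)
    (hinv : σ.map (chaconTd (Fin d)) = σ)
    (D : ℕ → Set (Fin d → ChaconX))
    (hD : ∀ n, n₀ ≤ n → IsNDiagonal (Fin d) n (D n) ∧ σ (chaconCd (Fin d) n \ D n) = 0)
    (hpos : ∀ n, n₀ ≤ n → 0 < σ (chaconCd (Fin d) n))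
    (hcomp : 0 < chaconMu {x₁ : ChaconX |
      ∃ x : Fin d → ChaconX, x ⟨0, hd⟩ = x₁ ∧ SeenByFam (Fin d) n₀ D x}) :
    IsGraphJoining (Fin d) σ :=
  chacon_compatible_positive_general ⟨0, hd⟩ n₀ σ hbf hinv
    (fun hσ => (hpos n₀ le_rfl).ne' (by rw [hσ]; rfl)) D hD hcomp
end

section
/- For any α ∈ (0,∞] with α ≠ 1, there is no joining between the systems (X, μ, T) and (X, αμ, T), where T is the infinite Chacon transformation and μ is Lebesgue measure on X = ℝ₊. -/
open MeasureTheory Set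
open scoped ENNReal NNReal Classical

/-!
Over `hₙ` steps an orbit visits `[0, 1)` at most `3ⁿ` times, because each of the `3ⁿ` levels of
tower `n` that make up `[0, 1)` recurs along the orbit with gaps of at least `hₙ`. The bound is
attained from every point of the leftmost third of a level of tower `n`: the first two copies of
tower `n` are adjacent in tower `n + 1`, so from there the orbit sees a full period. Almost every
point lies in such a third for some `n`. Hence, for a joining `m`, almost every pair `(x, y)` has a
time by which `x` has visited `[0, 1)` at least once and at least as often as `y`. The maximal
ergodic theorem turns this into `m (X × [0, 1)) ≤ m ([0, 1) × X)`. Exchanging the roles of `x` and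
`y` gives equality, that is, `α = 1`.
-/

section MaximalErgodic

open Filter Function Topology

variable {Z : Type*}

theorem birkhoffSum_of_semiconj {Y M : Type*} [AddCommMonoid M] {U : Z → Z} {V : Y → Y}
    {f : Z → Y} (hf : Semiconj f U V) (g : Y → M) (n : ℕ) (z : Z) :
    birkhoffSum U (g ∘ f) n z = birkhoffSum V g n (f z) :=
  Finset.sum_congr rfl fun i _ => congrArg g (hf.iterate_right i z)

/-- The maximal function `z ↦ max (S₀ h z, …, S_N h z)` of the Birkhoff sums of `h` along `U`. It
is nonnegative because `S₀ h = 0` takes part in the maximum. -/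
def birkhoffMax (U : Z → Z) (h : Z → ℝ) (N : ℕ) (z : Z) : ℝ :=
  partialSups (fun k => birkhoffSum U h k z) N

theorem birkhoffSum_le_birkhoffMax (U : Z → Z) (h : Z → ℝ) {k N : ℕ} (hk : k ≤ N) (z : Z) :
    birkhoffSum U h k z ≤ birkhoffMax U h N z :=
  le_partialSups_of_le (fun k => birkhoffSum U h k z) hk

theorem birkhoffMax_nonneg (U : Z → Z) (h : Z → ℝ) (N : ℕ) (z : Z) : 0 ≤ birkhoffMax U h N z := by
  simpa only [birkhoffSum_zero] using birkhoffSum_le_birkhoffMax U h N.zero_le z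

theorem exists_birkhoffMax_eq (U : Z → Z) (h : Z → ℝ) (N : ℕ) (z : Z) :
    ∃ k ≤ N, birkhoffMax U h N z = birkhoffSum U h k z :=
  exists_partialSups_eq _ N

theorem birkhoffMax_pos_iff {U : Z → Z} {h : Z → ℝ} {N : ℕ} {z : Z} :
    0 < birkhoffMax U h N z ↔ ∃ k ≤ N, 0 < birkhoffSum U h k z := by
  constructor
  · intro hpos
    obtain ⟨k, hk, heq⟩ := exists_birkhoffMax_eq U h N z
    exact ⟨k, hk, heq ▸ hpos⟩
  · rintro ⟨k, hk, hpos⟩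
    exact hpos.trans_le (birkhoffSum_le_birkhoffMax U h hk z)

theorem birkhoffMax_sub_comp_le_indicator (U : Z → Z) (h : Z → ℝ) (N : ℕ) (z : Z) :
    birkhoffMax U h N z - birkhoffMax U h N (U z) ≤
      {z | 0 < birkhoffMax U h N z}.indicator h z := by
  by_cases hz : 0 < birkhoffMax U h N z
  · rw [indicator_of_mem (show z ∈ {z | 0 < birkhoffMax U h N z} from hz)]
    obtain ⟨k, hk, heq⟩ := exists_birkhoffMax_eq U h N z
    cases k with
    | zero => exact absurd heq (by rw [birkhoffSum_zero]; exact hz.ne')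
    | succ k =>
      rw [heq, birkhoffSum_succ']
      linarith [birkhoffSum_le_birkhoffMax U h (k.le_succ.trans hk) (U z)]
  · rw [indicator_of_notMem (show z ∉ {z | 0 < birkhoffMax U h N z} from hz)]
    linarith [birkhoffMax_nonneg U h N (U z)]

variable [MeasurableSpace Z] {m : Measure Z} {U : Z → Z} {h : Z → ℝ}

theorem integrable_birkhoffSum (hU : MeasurePreserving U m m) (hh : Integrable h m) (k : ℕ) :
    Integrable (birkhoffSum U h k) m :=
  integrable_finsetSum _ fun i _ => (hU.iterate i).integrable_comp_of_integrable hh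

theorem integrable_birkhoffMax (hU : MeasurePreserving U m m) (hh : Integrable h m) (N : ℕ) :
    Integrable (birkhoffMax U h N) m := by
  induction N with
  | zero => exact integrable_birkhoffSum hU hh 0
  | succ N ih =>
    have hsup : birkhoffMax U h (N + 1) = birkhoffMax U h N ⊔ birkhoffSum U h (N + 1) :=
      funext fun _ => partialSups_add_one _ N
    rw [hsup]
    exact ih.sup (integrable_birkhoffSum hU hh (N + 1))

theorem nullMeasurableSet_birkhoffMax_pos (hU : MeasurePreserving U m m) (hh : Integrable h m)
    (N : ℕ) : NullMeasurableSet {z | 0 < birkhoffMax U h N z} m :=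
  nullMeasurableSet_lt aemeasurable_const (integrable_birkhoffMax hU hh N).aemeasurable

-- `M - M ∘ U ≤ 1_{M > 0} h` for the maximal function `M`, and the left-hand side integrates to `0`.
theorem setIntegral_birkhoffMax_pos_nonneg (hU : MeasurePreserving U m m) (hh : Integrable h m)
    (N : ℕ) : 0 ≤ ∫ z in {z | 0 < birkhoffMax U h N z}, h z ∂m := by
  have hM := integrable_birkhoffMax hU hh N
  have hMU : Integrable (fun z => birkhoffMax U h N (U z)) m := hU.integrable_comp_of_integrable hM
  have hpos := nullMeasurableSet_birkhoffMax_pos hU hh N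
  have hinv : ∫ z, birkhoffMax U h N (U z) ∂m = ∫ z, birkhoffMax U h N z ∂m := by
    conv_rhs => rw [← hU.map_eq]
    refine (integral_map hU.aemeasurable ?_).symm
    exact hU.map_eq.symm ▸ hM.aestronglyMeasurable
  calc (0 : ℝ) = ∫ z, (birkhoffMax U h N z - birkhoffMax U h N (U z)) ∂m := by
        rw [integral_sub hM hMU, hinv, sub_self]
    _ ≤ ∫ z, {z | 0 < birkhoffMax U h N z}.indicator h z ∂m :=
        integral_mono (hM.sub hMU) (hh.indicator₀ hpos) (birkhoffMax_sub_comp_le_indicator U h N)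
    _ = ∫ z in {z | 0 < birkhoffMax U h N z}, h z ∂m := integral_indicator₀ hpos

theorem setIntegral_exists_birkhoffSum_pos_nonneg (hU : MeasurePreserving U m m)
    (hh : Integrable h m) : 0 ≤ ∫ z in {z | ∃ k, 0 < birkhoffSum U h k z}, h z ∂m := by
  have hunion : {z | ∃ k, 0 < birkhoffSum U h k z} = ⋃ N, {z | 0 < birkhoffMax U h N z} := by
    ext z
    simp only [mem_iUnion, mem_ofPred_eq, birkhoffMax_pos_iff]
    exact ⟨fun ⟨k, hk⟩ => ⟨k, k, le_rfl, hk⟩, fun ⟨_, k, _, hk⟩ => ⟨k, hk⟩⟩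
  have hmono : Monotone fun N => {z | 0 < birkhoffMax U h N z} := by
    intro M N hMN z hz
    obtain ⟨k, hk, hpos⟩ := birkhoffMax_pos_iff.1 hz
    exact birkhoffMax_pos_iff.2 ⟨k, hk.trans hMN, hpos⟩
  rw [hunion]
  exact ge_of_tendsto'
    (tendsto_setIntegral_of_monotone₀ (nullMeasurableSet_birkhoffMax_pos hU hh) hmono
      hh.integrableOn)
    (setIntegral_birkhoffMax_pos_nonneg hU hh)

theorem integral_le_of_ae_exists_birkhoffSum_le {φ ψ : Z → ℝ} (hU : MeasurePreserving U m m)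
    (hφ : Integrable φ m) (hψ : Integrable ψ m)
    (hle : ∀ᵐ z ∂m, ∃ k, birkhoffSum U ψ k z ≤ birkhoffSum U φ k z ∧ 0 < birkhoffSum U φ k z) :
    ∫ z, ψ z ∂m ≤ ∫ z, φ z ∂m := by
  have hscaled : ∀ c > 1, ∫ z, ψ z ∂m ≤ c * ∫ z, φ z ∂m := by
    intro c hc
    have hsum (k : ℕ) (z : Z) : birkhoffSum U (c • φ - ψ) k z =
        c * birkhoffSum U φ k z - birkhoffSum U ψ k z := by
      simp only [birkhoffSum, Pi.sub_apply, Pi.smul_apply, smul_eq_mul, Finset.sum_sub_distrib,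
        Finset.mul_sum]
    have hpos : ∀ᵐ z ∂m, z ∉ {z | ∃ k, 0 < birkhoffSum U (c • φ - ψ) k z} →
        (c • φ - ψ) z = 0 := by
      filter_upwards [hle] with z ⟨k, hk, hkpos⟩ hz
      exact absurd ⟨k, by rw [hsum]; nlinarith⟩ hz
    have hnonneg := setIntegral_exists_birkhoffSum_pos_nonneg hU ((hφ.smul c).sub hψ)
    rw [setIntegral_eq_integral_of_ae_compl_eq_zero hpos] at hnonneg
    simp only [Pi.sub_apply, Pi.smul_apply, smul_eq_mul] at hnonneg
    rw [integral_sub (hφ.const_mul c) hψ, integral_const_mul] at hnonneg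
    exact sub_nonneg.1 hnonneg
  have hlim : Tendsto (fun c : ℝ => c * ∫ z, φ z ∂m) (𝓝[>] 1) (𝓝 (∫ z, φ z ∂m)) := by
    simpa only [id, one_mul] using
      (tendsto_id.mul_const (∫ z, φ z ∂m)).mono_left (nhdsWithin_le_nhds (a := (1 : ℝ)))
  exact ge_of_tendsto hlim (eventually_mem_nhdsWithin.mono hscaled)

theorem measure_le_of_ae_exists_birkhoffSum_indicator_le [SigmaFinite m]
    (hU : MeasurePreserving U m m) {F G : Set Z} (hF : MeasurableSet F) (hG : MeasurableSet G)
    (hle : ∀ᵐ z ∂m, ∃ k,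
      birkhoffSum U (G.indicator (1 : Z → ℝ)) k z ≤ birkhoffSum U (F.indicator (1 : Z → ℝ)) k z ∧
        0 < birkhoffSum U (F.indicator (1 : Z → ℝ)) k z) :
    m G ≤ m F := by
  by_contra! hlt
  have hFfin : m F ≠ ⊤ := hlt.ne_top
  obtain ⟨G', hG', hsub, hFG', hG'fin⟩ := Measure.exists_subset_measure_lt_top hG hlt
  have hint {s : Set Z} (hs : MeasurableSet s) (hfin : m s ≠ ⊤) :
      Integrable (s.indicator (1 : Z → ℝ)) m :=
    (integrable_indicator_iff hs).2 (integrableOn_const hfin)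
  have hmono (k : ℕ) (z : Z) : birkhoffSum U (G'.indicator (1 : Z → ℝ)) k z ≤
      birkhoffSum U (G.indicator (1 : Z → ℝ)) k z :=
    Finset.sum_le_sum fun i _ =>
      indicator_le_indicator_of_subset hsub (fun _ => zero_le_one) (U^[i] z)
  have hreal : m.real G' ≤ m.real F := by
    rw [← integral_indicator_one hG', ← integral_indicator_one hF]
    refine integral_le_of_ae_exists_birkhoffSum_le hU (hint hF hFfin) (hint hG' hG'fin.ne) ?_
    filter_upwards [hle] with z ⟨k, hk, hpos⟩
    exact ⟨k, (hmono k z).trans hk, hpos⟩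
  exact hFG'.not_ge ((ENNReal.toReal_le_toReal hG'fin.ne hFfin).1 hreal)

end MaximalErgodic

namespace Chacon

open Filter Function Topology

/-! ### Levels and triadic intervals -/

theorem chaconH_succ (n : ℕ) : chaconH (n + 1) = 6 * chaconH n + 2 := by
  rw [chaconH]; ring

theorem six_pow_le_chaconH (n : ℕ) : 6 ^ n ≤ chaconH n := by
  induction n with
  | zero => exact le_rfl
  | succ n ih => rw [chaconH_succ, pow_succ]; omega

theorem three_pow_le_chaconH (n : ℕ) : 3 ^ n ≤ chaconH n :=
  (Nat.pow_le_pow_left (by norm_num) n).trans (six_pow_le_chaconH n)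

theorem chaconH_pos (n : ℕ) : 0 < chaconH n :=
  (pow_pos three_pos n).trans_le (three_pow_le_chaconH n)

theorem chaconH_mono : Monotone chaconH :=
  monotone_nat_of_le_succ fun n => by rw [chaconH_succ]; omega

/-- The position in tower `n + 1` of the bottom of the `j`-th of the three copies of tower `n`
that it contains. -/
def copyShift (n : ℕ) : Fin 3 → ℕ
  | 0 => 0
  | 1 => chaconH n
  | 2 => 2 * chaconH n + 1

theorem add_copyShift_add_chaconH_lt {n k : ℕ} (hk : k < chaconH n) (j : Fin 3) :
    k + copyShift n j + chaconH n < chaconH (n + 1) := by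
  rw [chaconH_succ]
  match j with
  | 0 | 1 | 2 => simp only [copyShift]; omega

theorem copyShift_add_chaconH_le {n : ℕ} {i j : Fin 3} (hij : i < j) :
    copyShift n i + chaconH n ≤ copyShift n j := by
  match i, j with
  | 0, 1 | 0, 2 | 1, 2 => simp only [copyShift]; omega
  | 0, 0 | 1, 0 | 1, 1 | 2, 0 | 2, 1 | 2, 2 => exact absurd hij (by decide)

/-- The integer `i` such that level `k` of tower `n` is the triadic interval
`[i / 3ⁿ, (i + 1) / 3ⁿ)`. -/
def levelIndex : ℕ → ℕ → ℕ
  | 0, _ => 0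
  | n + 1, k =>
      if k < chaconH n then 3 * levelIndex n k
      else if k < 2 * chaconH n then 3 * levelIndex n (k - chaconH n) + 1
      else if k = 2 * chaconH n then 3 * chaconH n
      else if k ≤ 3 * chaconH n then 3 * levelIndex n (k - 2 * chaconH n - 1) + 2
      else k

theorem chaconL_eq (n k : ℕ) : chaconL n k = levelIndex n k * (3 : ℝ)⁻¹ ^ n := by
  induction n generalizing k with
  | zero => simp [chaconL, levelIndex]
  | succ n ih =>
    unfold chaconL levelIndex
    split_ifs <;> simp only [ih, pow_succ] <;> push_cast <;> ring

theorem levelIndex_add_copyShift {n k : ℕ} (hk : k < chaconH n) (j : Fin 3) :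
    levelIndex (n + 1) (k + copyShift n j) = 3 * levelIndex n k + j := by
  fin_cases j
  · simp [copyShift, levelIndex, hk]
  · simp [copyShift, levelIndex, show k + chaconH n < 2 * chaconH n by omega]
  · have hbot : ¬ k + (2 * chaconH n + 1) < chaconH n := by omega
    have hmid : ¬ k + (2 * chaconH n + 1) < 2 * chaconH n := by omega
    have hspacer : k + (2 * chaconH n + 1) ≠ 2 * chaconH n := by omega
    have htop : k + (2 * chaconH n + 1) ≤ 3 * chaconH n := by omega
    have hpos : k + (2 * chaconH n + 1) - 2 * chaconH n - 1 = k := by omega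
    simp [copyShift, levelIndex, hbot, hmid, hspacer, htop, hpos]

theorem levelIndex_middleSpacer (n : ℕ) : levelIndex (n + 1) (2 * chaconH n) = 3 * chaconH n := by
  have := chaconH_pos n
  simp [levelIndex, show ¬ 2 * chaconH n < chaconH n by omega]

theorem levelIndex_topSpacer {n k : ℕ} (hk : 3 * chaconH n < k) : levelIndex (n + 1) k = k := by
  simp [levelIndex, show ¬ k < chaconH n by omega, show ¬ k < 2 * chaconH n by omega,
    show k ≠ 2 * chaconH n by omega, hk]

theorem exists_copy_or_spacer (n k : ℕ) :
    (∃ a < chaconH n, ∃ j, k = a + copyShift n j) ∨ k = 2 * chaconH n ∨ 3 * chaconH n < k := by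
  by_cases hbot : k < chaconH n
  · exact Or.inl ⟨k, hbot, 0, rfl⟩
  by_cases hmid : k < 2 * chaconH n
  · exact Or.inl ⟨k - chaconH n, by omega, 1, by simp only [copyShift]; omega⟩
  by_cases htop : 2 * chaconH n < k ∧ k ≤ 3 * chaconH n
  · exact Or.inl ⟨k - (2 * chaconH n + 1), by omega, 2, by simp only [copyShift]; omega⟩
  · omega

theorem exists_copy_of_levelIndex_lt {n k : ℕ} (hk : levelIndex (n + 1) k < 3 * chaconH n) :
    ∃ a < chaconH n, ∃ j, k = a + copyShift n j := by
  rcases exists_copy_or_spacer n k with h | rfl | h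
  · exact h
  · rw [levelIndex_middleSpacer] at hk; omega
  · rw [levelIndex_topSpacer h] at hk; omega

theorem levelIndex_lt {n k : ℕ} (hk : k < chaconH n) : levelIndex n k < chaconH n := by
  induction n generalizing k with
  | zero => exact zero_lt_one
  | succ n ih =>
    have hsucc := chaconH_succ n
    rcases exists_copy_or_spacer n k with ⟨a, ha, j, rfl⟩ | rfl | h
    · have := ih ha
      rw [levelIndex_add_copyShift ha]; omega
    · rw [levelIndex_middleSpacer]; omega
    · rwa [levelIndex_topSpacer h]

theorem exists_levelIndex_eq {n i : ℕ} (hi : i < chaconH n) :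
    ∃ k < chaconH n, levelIndex n k = i := by
  induction n generalizing i with
  | zero => exact ⟨0, zero_lt_one, (Nat.lt_one_iff.1 hi).symm⟩
  | succ n ih =>
    have hsucc := chaconH_succ n
    rcases lt_trichotomy i (3 * chaconH n) with h | rfl | h
    · obtain ⟨a, ha, hai⟩ := ih (i := i / 3) (by omega)
      have := add_copyShift_add_chaconH_lt ha (Fin.ofNat 3 i)
      refine ⟨a + copyShift n (Fin.ofNat 3 i), by omega, ?_⟩
      rw [levelIndex_add_copyShift ha, hai, Fin.val_ofNat, Nat.div_add_mod]
    · exact ⟨2 * chaconH n, by omega, levelIndex_middleSpacer n⟩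
    · exact ⟨i, hi, levelIndex_topSpacer h⟩

theorem levelIndex_injOn (n : ℕ) : InjOn (levelIndex n) (Finset.range (chaconH n)) :=
  Finset.injOn_of_surjOn_of_card_le (t := Finset.range (chaconH n)) _
    (fun _ hk => by simpa using levelIndex_lt (by simpa using hk))
    (fun _ hi => by simpa using exists_levelIndex_eq (by simpa using hi)) le_rfl

/-- The integer `i` such that `x ≥ 0` lies in the triadic interval `[i / 3ⁿ, (i + 1) / 3ⁿ)`. -/
noncomputable def triadicIndex (n : ℕ) (x : ℝ) : ℕ := ⌊x * 3 ^ n⌋₊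

theorem triadicIndex_succ_div_three (n : ℕ) (x : ℝ) :
    triadicIndex (n + 1) x / 3 = triadicIndex n x := by
  rw [triadicIndex, ← Nat.floor_div_natCast, triadicIndex, pow_succ, Nat.cast_ofNat, ← mul_assoc,
    mul_div_cancel_right₀ _ three_ne_zero]

theorem triadicIndex_lt_three_pow_iff {n : ℕ} {x : ℝ} (hx : 0 ≤ x) :
    triadicIndex n x < 3 ^ n ↔ x < 1 := by
  rw [triadicIndex, Nat.floor_lt (by positivity), Nat.cast_pow, Nat.cast_ofNat,
    mul_lt_iff_lt_one_left (by positivity)]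

theorem mem_chaconLevel_iff {n k : ℕ} {x : ℝ} :
    x ∈ chaconLevel n k ↔ 0 ≤ x ∧ triadicIndex n x = levelIndex n k := by
  have h3 : (0 : ℝ) < 3 ^ n := by positivity
  have hIco : x ∈ chaconLevel n k ↔
      (levelIndex n k : ℝ) ≤ x * 3 ^ n ∧ x * 3 ^ n < levelIndex n k + 1 := by
    rw [chaconLevel, mem_Ico, chaconL_eq, inv_pow, ← add_one_mul, ← div_eq_mul_inv,
      ← div_eq_mul_inv, div_le_iff₀ h3, lt_div_iff₀ h3]
  rw [hIco]
  constructor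
  · intro h
    have hx : 0 ≤ x * 3 ^ n := (Nat.cast_nonneg _).trans h.1
    exact ⟨nonneg_of_mul_nonneg_left hx h3, (Nat.floor_eq_iff hx).2 h⟩
  · rintro ⟨hx, h⟩
    exact (Nat.floor_eq_iff (by positivity)).1 h

theorem eq_of_mem_chaconLevel {n k l : ℕ} {x : ℝ} (hk : k < chaconH n) (hl : l < chaconH n)
    (hxk : x ∈ chaconLevel n k) (hxl : x ∈ chaconLevel n l) : k = l :=
  levelIndex_injOn n (by simpa using hk) (by simpa using hl)
    ((mem_chaconLevel_iff.1 hxk).2.symm.trans (mem_chaconLevel_iff.1 hxl).2)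

theorem exists_mem_chaconLevel_succ {n k : ℕ} {x : ℝ} (hk : k < chaconH n)
    (hx : x ∈ chaconLevel n k) : ∃ j, x ∈ chaconLevel (n + 1) (k + copyShift n j) := by
  obtain ⟨hx0, hxk⟩ := mem_chaconLevel_iff.1 hx
  refine ⟨Fin.ofNat 3 (triadicIndex (n + 1) x), mem_chaconLevel_iff.2 ⟨hx0, ?_⟩⟩
  have hdiv := triadicIndex_succ_div_three n x
  rw [levelIndex_add_copyShift hk, ← hxk, Fin.val_ofNat]
  omega

theorem exists_mem_chaconLevel {x : ℝ} (hx : 0 ≤ x) (n : ℕ) :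
    ∃ N ≥ n, ∃ k < chaconH N, x ∈ chaconLevel N k := by
  obtain ⟨M, hM⟩ := pow_unbounded_of_one_lt x one_lt_two
  refine ⟨max M n, le_max_right _ _, ?_⟩
  generalize hN : max M n = N
  have hxN : x < 2 ^ N := hM.trans_le (pow_le_pow_right₀ one_le_two (hN ▸ le_max_left _ _))
  have hindex : triadicIndex N x < chaconH N := by
    rw [triadicIndex, Nat.floor_lt (by positivity)]
    calc x * 3 ^ N < 2 ^ N * 3 ^ N := by gcongr
      _ = ((6 ^ N : ℕ) : ℝ) := by rw [← mul_pow]; norm_num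
      _ ≤ chaconH N := by exact_mod_cast six_pow_le_chaconH N
  obtain ⟨k, hk, hkx⟩ := exists_levelIndex_eq hindex
  exact ⟨k, hk, mem_chaconLevel_iff.2 ⟨hx, hkx.symm⟩⟩

-- The `3hₙ + 1` spacers on top of tower `n + 1` leave room for `hₙ` further levels.
theorem exists_mem_chaconLevel_add_lt {x : ℝ} (hx : 0 ≤ x) (n : ℕ) :
    ∃ N ≥ n, ∃ k, k + chaconH n < chaconH N ∧ x ∈ chaconLevel N k := by
  obtain ⟨N, hN, k, hk, hxk⟩ := exists_mem_chaconLevel hx n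
  obtain ⟨j, hj⟩ := exists_mem_chaconLevel_succ hk hxk
  have := add_copyShift_add_chaconH_lt hk j
  have := chaconH_mono hN
  exact ⟨N + 1, by omega, k + copyShift N j, by omega, hj⟩

/-! ### The action of `T` on the levels -/

/-- The translation that carries level `k` of tower `n` onto level `k + 1`. -/
noncomputable def levelStep (n k : ℕ) : ℝ := chaconL n (k + 1) - chaconL n k

theorem levelStep_add_copyShift {n k : ℕ} (hk : k + 1 < chaconH n) (j : Fin 3) :
    levelStep (n + 1) (k + copyShift n j) = levelStep n k := by
  rw [levelStep, levelStep, add_right_comm]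
  simp only [chaconL_eq, levelIndex_add_copyShift hk,
    levelIndex_add_copyShift (Nat.lt_of_succ_lt hk), pow_succ]
  push_cast
  ring

theorem exists_levelStep_eq {n k : ℕ} {x : ℝ} (hk : k + 1 < chaconH n) (hx : x ∈ chaconLevel n k)
    {N : ℕ} (hN : n ≤ N) :
    ∃ l, l + 1 < chaconH N ∧ x ∈ chaconLevel N l ∧ levelStep N l = levelStep n k := by
  induction N, hN using Nat.le_induction with
  | base => exact ⟨k, hk, hx, rfl⟩
  | succ N _ ih =>
    obtain ⟨l, hl, hxl, hstep⟩ := ih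
    obtain ⟨j, hj⟩ := exists_mem_chaconLevel_succ (by omega) hxl
    have := add_copyShift_add_chaconH_lt (Nat.lt_of_succ_lt hl) j
    exact ⟨_, by omega, hj, (levelStep_add_copyShift hl j).trans hstep⟩

theorem chaconT0_of_mem {n k : ℕ} {x : ℝ} (hk : k + 1 < chaconH n) (hx : x ∈ chaconLevel n k) :
    chaconT0 x = x + levelStep n k := by
  have hex : ∃ p : ℕ × ℕ, p.2 + 1 < chaconH p.1 ∧ x ∈ chaconLevel p.1 p.2 := ⟨(n, k), hk, hx⟩
  obtain ⟨hp, hxp⟩ := hex.choose_spec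
  rw [chaconT0, dif_pos hex, sub_add_eq_add_sub, add_sub_assoc]
  change x + levelStep hex.choose.1 hex.choose.2 = _
  generalize hex.choose = p at hp hxp
  obtain ⟨a, ha, hxa, hstepa⟩ := exists_levelStep_eq hk hx (le_max_left n p.1)
  obtain ⟨b, hb, hxb, hstepb⟩ := exists_levelStep_eq hp hxp (le_max_right n p.1)
  obtain rfl : a = b :=
    eq_of_mem_chaconLevel (Nat.lt_of_succ_lt ha) (Nat.lt_of_succ_lt hb) hxa hxb
  rw [← hstepa, ← hstepb]

theorem chaconT0_mem {n k : ℕ} {x : ℝ} (hk : k + 1 < chaconH n) (hx : x ∈ chaconLevel n k) :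
    chaconT0 x ∈ chaconLevel n (k + 1) := by
  rw [chaconT0_of_mem hk hx, levelStep]
  rw [chaconLevel, mem_Ico] at hx ⊢
  constructor <;> linarith [hx.1, hx.2]

theorem chaconT_mem {n k : ℕ} {x : ChaconX} (hk : k + 1 < chaconH n)
    (hx : (x : ℝ) ∈ chaconLevel n k) : (chaconT x : ℝ) ∈ chaconLevel n (k + 1) := by
  have hmem := chaconT0_mem hk hx
  change max 0 (chaconT0 x) ∈ chaconLevel n (k + 1)
  rwa [max_eq_right (mem_chaconLevel_iff.1 hmem).1]

theorem iterate_chaconT_mem {n k : ℕ} {x : ChaconX} (hx : (x : ℝ) ∈ chaconLevel n k) {i : ℕ}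
    (hi : k + i < chaconH n) : (chaconT^[i] x : ℝ) ∈ chaconLevel n (k + i) := by
  induction i with
  | zero => exact hx
  | succ i ih =>
    rw [Function.iterate_succ_apply']
    exact chaconT_mem hi (ih (Nat.lt_of_succ_lt hi))

theorem measurable_chaconT : Measurable chaconT := by
  refine Measurable.subtype_mk (measurable_const.max fun s hs => ?_)
  have hpre : (fun x : ChaconX => chaconT0 x) ⁻¹' s =
      ⋃ p : ℕ × ℕ, {x : ChaconX | p.2 + 1 < chaconH p.1 ∧ (x : ℝ) ∈ chaconLevel p.1 p.2 ∧
        (x : ℝ) + levelStep p.1 p.2 ∈ s} := by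
    ext x
    simp only [mem_preimage, mem_iUnion, mem_ofPred_eq]
    constructor
    · intro hxs
      obtain ⟨N, _, k, hk, hx⟩ := exists_mem_chaconLevel_add_lt x.2 0
      exact ⟨(N, k), hk, hx, chaconT0_of_mem hk hx ▸ hxs⟩
    · rintro ⟨p, hp, hx, hxs⟩
      rwa [chaconT0_of_mem hp hx]
  rw [hpre]
  exact MeasurableSet.iUnion fun p => (MeasurableSet.const _).inter
    ((measurable_subtype_coe measurableSet_Ico).inter
      ((measurable_subtype_coe.add_const _) hs))

/-! ### Visits to the base interval -/

/-- Tower `0`, the interval `[0, 1)`. -/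
def base : Set ChaconX := {x | (x : ℝ) < 1}

theorem measurableSet_base : MeasurableSet base :=
  measurable_subtype_coe measurableSet_Iio

/-- The levels of tower `n` that make up the base interval. -/
def baseLevels (n : ℕ) : Finset ℕ := {k ∈ Finset.range (chaconH n) | levelIndex n k < 3 ^ n}

theorem mem_baseLevels {n k : ℕ} :
    k ∈ baseLevels n ↔ k < chaconH n ∧ levelIndex n k < 3 ^ n := by
  rw [baseLevels, Finset.mem_filter, Finset.mem_range]

theorem card_baseLevels (n : ℕ) : (baseLevels n).card = 3 ^ n := by
  rw [← Finset.card_range (3 ^ n)]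
  refine Finset.card_nbij (levelIndex n) (fun k hk => ?_) ?_ (fun i hi => ?_)
  · exact Finset.mem_range.2 (mem_baseLevels.1 hk).2
  · exact (levelIndex_injOn n).mono (Finset.coe_subset.2 (Finset.filter_subset _ _))
  · have hi' : i < 3 ^ n := by simpa using hi
    obtain ⟨k, hk, rfl⟩ := exists_levelIndex_eq (hi'.trans_le (three_pow_le_chaconH n))
    exact ⟨k, mem_baseLevels.2 ⟨hk, hi'⟩, rfl⟩

theorem add_copyShift_mem_baseLevels_succ_iff {n k : ℕ} (hk : k < chaconH n) (j : Fin 3) :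
    k + copyShift n j ∈ baseLevels (n + 1) ↔ k ∈ baseLevels n := by
  have := add_copyShift_add_chaconH_lt hk j
  rw [mem_baseLevels, mem_baseLevels, levelIndex_add_copyShift hk, pow_succ]
  omega

theorem exists_copy_of_mem_baseLevels_succ {n k : ℕ} (hk : k ∈ baseLevels (n + 1)) :
    ∃ a ∈ baseLevels n, ∃ j, k = a + copyShift n j := by
  have hindex : levelIndex (n + 1) k < 3 * chaconH n := by
    calc levelIndex (n + 1) k < 3 ^ (n + 1) := (mem_baseLevels.1 hk).2
      _ = 3 * 3 ^ n := pow_succ' 3 n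
      _ ≤ 3 * chaconH n := Nat.mul_le_mul_left 3 (three_pow_le_chaconH n)
  obtain ⟨a, ha, j, rfl⟩ := exists_copy_of_levelIndex_lt hindex
  exact ⟨a, (add_copyShift_mem_baseLevels_succ_iff ha j).1 hk, j, rfl⟩

theorem mem_base_iff_mem_baseLevels {n k : ℕ} {x : ChaconX} (hk : k < chaconH n)
    (hx : (x : ℝ) ∈ chaconLevel n k) : x ∈ base ↔ k ∈ baseLevels n := by
  obtain ⟨hx0, hindex⟩ := mem_chaconLevel_iff.1 hx
  rw [mem_baseLevels, and_iff_right hk, ← hindex, triadicIndex_lt_three_pow_iff hx0]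
  rfl

/-- The number of visits of `x, T x, …, T ^ (l - 1) x` to the base interval. -/
noncomputable def baseVisits (l : ℕ) (x : ChaconX) : ℝ :=
  birkhoffSum chaconT (base.indicator (1 : ChaconX → ℝ)) l x

theorem baseVisits_eq_card {N k l : ℕ} {x : ChaconX} (hx : (x : ℝ) ∈ chaconLevel N k)
    (hl : k + l ≤ chaconH N) :
    baseVisits l x = ({i ∈ Finset.Ico k (k + l) | i ∈ baseLevels N} : Finset ℕ).card := by
  rw [baseVisits, birkhoffSum, Finset.natCast_card_filter, Finset.sum_Ico_eq_sum_range,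
    add_tsub_cancel_left]
  refine Finset.sum_congr rfl fun i hi => ?_
  have hlt : k + i < chaconH N := by have := Finset.mem_range.1 hi; omega
  rw [indicator_apply,
    if_congr (mem_base_iff_mem_baseLevels hlt (iterate_chaconT_mem hx hlt)) rfl rfl,
    Pi.one_apply]

/-- `IsCopyStart n r s` says that one of the `3 ^ r` copies of tower `n` contained in tower `n + r`
starts at level `s`. -/
def IsCopyStart (n : ℕ) : ℕ → ℕ → Prop
  | 0, s => s = 0
  | r + 1, s => ∃ t, IsCopyStart n r t ∧ ∃ j, s = t + copyShift (n + r) j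

theorem IsCopyStart.add_chaconH_le {n r s : ℕ} (hs : IsCopyStart n r s) :
    s + chaconH n ≤ chaconH (n + r) := by
  induction r generalizing s with
  | zero =>
    obtain rfl : s = 0 := hs
    exact (zero_add _).le
  | succ r ih =>
    obtain ⟨t, ht, j, rfl⟩ := hs
    have := ih ht
    have hpos := chaconH_pos n
    have hlt : t < chaconH (n + r) := by omega
    have := add_copyShift_add_chaconH_lt hlt j
    rw [← add_assoc]
    omega

theorem IsCopyStart.add_chaconH_le_of_lt {n r s t : ℕ} (hs : IsCopyStart n r s)
    (ht : IsCopyStart n r t) (hst : s < t) : s + chaconH n ≤ t := by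
  induction r generalizing s t with
  | zero => rw [IsCopyStart] at hs ht; omega
  | succ r ih =>
    obtain ⟨s, hs, i, rfl⟩ := hs
    obtain ⟨t, ht, j, rfl⟩ := ht
    have := hs.add_chaconH_le
    have := ht.add_chaconH_le
    rcases lt_trichotomy i j with hij | rfl | hij
    · have := copyShift_add_chaconH_le (n := n + r) hij
      omega
    · have := ih hs ht (by omega)
      omega
    · have := copyShift_add_chaconH_le (n := n + r) hij
      omega

theorem exists_isCopyStart_of_mem_baseLevels {n r k : ℕ} (hk : k ∈ baseLevels (n + r)) :
    ∃ s, IsCopyStart n r s ∧ ∃ a ∈ baseLevels n, k = s + a := by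
  induction r generalizing k with
  | zero => exact ⟨0, rfl, k, hk, (zero_add k).symm⟩
  | succ r ih =>
    obtain ⟨b, hb, j, rfl⟩ := exists_copy_of_mem_baseLevels_succ hk
    obtain ⟨s, hs, a, ha, rfl⟩ := ih hb
    exact ⟨s + copyShift (n + r) j, ⟨s, hs, j, rfl⟩, a, ha, add_right_comm _ _ _⟩

-- A window of `hₙ` levels meets each level of tower `n` in at most one of its disjoint copies.
theorem card_filter_mem_baseLevels_le (n r k : ℕ) :
    ({i ∈ Finset.Ico k (k + chaconH n) | i ∈ baseLevels (n + r)} : Finset ℕ).card ≤ 3 ^ n := by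
  rw [← card_baseLevels n]
  refine Finset.card_le_card_of_forall_subsingleton (fun i a => ∃ s, IsCopyStart n r s ∧ i = s + a)
    (fun i hi => ?_) (fun a _ i hi i' hi' => ?_)
  · obtain ⟨s, hs, a, ha, rfl⟩ :=
      exists_isCopyStart_of_mem_baseLevels (Finset.mem_filter.1 hi).2
    exact ⟨a, ha, s, hs, rfl⟩
  · obtain ⟨hwindow, s, hs, rfl⟩ := hi
    obtain ⟨hwindow', s', hs', rfl⟩ := hi'
    rw [Finset.mem_filter, Finset.mem_Ico] at hwindow hwindow'
    rcases lt_trichotomy s s' with hlt | rfl | hlt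
    · have := hs.add_chaconH_le_of_lt hs' hlt
      omega
    · rfl
    · have := hs'.add_chaconH_le_of_lt hs hlt
      omega

theorem baseVisits_chaconH_le (n : ℕ) (x : ChaconX) : baseVisits (chaconH n) x ≤ 3 ^ n := by
  obtain ⟨N, hN, k, hk, hx⟩ := exists_mem_chaconLevel_add_lt x.2 n
  obtain ⟨r, rfl⟩ := Nat.exists_eq_add_of_le hN
  rw [baseVisits_eq_card hx hk.le]
  exact_mod_cast card_filter_mem_baseLevels_le n r k

-- The first two copies of tower `n` in tower `n + 1` are adjacent, so the base levels recur with
-- period `hₙ` there.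
theorem mem_baseLevels_succ_iff_mod_mem {n k : ℕ} (hk : k < 2 * chaconH n) :
    k ∈ baseLevels (n + 1) ↔ k % chaconH n ∈ baseLevels n := by
  by_cases hfirst : k < chaconH n
  · rw [Nat.mod_eq_of_lt hfirst]
    exact add_copyShift_mem_baseLevels_succ_iff hfirst 0
  · have hsecond : k - chaconH n < chaconH n := by omega
    rw [Nat.mod_eq_sub_mod (not_lt.1 hfirst), Nat.mod_eq_of_lt hsecond,
      ← add_copyShift_mem_baseLevels_succ_iff hsecond 1]
    change _ ↔ k - chaconH n + chaconH n ∈ _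
    rw [Nat.sub_add_cancel (not_lt.1 hfirst)]

theorem card_filter_mem_baseLevels_succ {n k : ℕ} (hk : k ≤ chaconH n) :
    ({i ∈ Finset.Ico k (k + chaconH n) | i ∈ baseLevels (n + 1)} : Finset ℕ).card = 3 ^ n := by
  have hperiodic : Periodic (fun i => i % chaconH n ∈ baseLevels n) (chaconH n) :=
    fun i => by simp only [Nat.add_mod_right]
  calc ({i ∈ Finset.Ico k (k + chaconH n) | i ∈ baseLevels (n + 1)} : Finset ℕ).card
      = ({i ∈ Finset.Ico k (k + chaconH n) | i % chaconH n ∈ baseLevels n} : Finset ℕ).card :=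
        congrArg _ (Finset.filter_congr fun i hi =>
          mem_baseLevels_succ_iff_mod_mem (by have := Finset.mem_Ico.1 hi; omega))
    _ = ({i ∈ Finset.range (chaconH n) | i % chaconH n ∈ baseLevels n} : Finset ℕ).card := by
        rw [Nat.filter_Ico_card_eq_of_periodic _ _ _ hperiodic, Nat.count_eq_card_filter_range]
    _ = (baseLevels n).card := by
        congr 1
        ext i
        rw [Finset.mem_filter, Finset.mem_range]
        constructor
        · rintro ⟨hi, hmod⟩
          rwa [Nat.mod_eq_of_lt hi] at hmod
        · intro hi
          have hlt := (mem_baseLevels.1 hi).1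
          exact ⟨hlt, by rwa [Nat.mod_eq_of_lt hlt]⟩
    _ = 3 ^ n := card_baseLevels n

theorem baseVisits_chaconH_eq {n k : ℕ} {x : ChaconX} (hk : k < chaconH n)
    (hx : (x : ℝ) ∈ chaconLevel (n + 1) k) : baseVisits (chaconH n) x = 3 ^ n := by
  have hsucc := chaconH_succ n
  rw [baseVisits_eq_card hx (by omega), card_filter_mem_baseLevels_succ hk.le, Nat.cast_pow,
    Nat.cast_ofNat]

/-! ### Almost every point visits a first subcolumn -/

/-- The points that lie, for some `n`, in the leftmost third of a level of tower `n`. -/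
def firstSubcolumns : Set ℝ := {x | ∃ n, ∃ k < chaconH n, x ∈ chaconLevel (n + 1) k}

theorem volume_chaconLevel (n k : ℕ) : volume (chaconLevel n k) = 3⁻¹ ^ n := by
  rw [chaconLevel, Real.volume_Ico, add_sub_cancel_left, ENNReal.ofReal_pow (by positivity),
    ENNReal.ofReal_inv_of_pos three_pos, ENNReal.ofReal_ofNat]

theorem chaconLevel_diff_firstSubcolumns_subset {n k : ℕ} (hk : k < chaconH n) :
    chaconLevel n k \ firstSubcolumns ⊆
      (chaconLevel (n + 1) (k + copyShift n 1) \ firstSubcolumns) ∪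
        (chaconLevel (n + 1) (k + copyShift n 2) \ firstSubcolumns) := by
  rintro x ⟨hx, hfirst⟩
  obtain ⟨j, hj⟩ := exists_mem_chaconLevel_succ hk hx
  fin_cases j
  · exact absurd ⟨n, k, hk, hj⟩ hfirst
  · exact Or.inl ⟨hj, hfirst⟩
  · exact Or.inr ⟨hj, hfirst⟩

theorem volume_chaconLevel_diff_firstSubcolumns_le (r : ℕ) {n k : ℕ} (hk : k < chaconH n) :
    volume (chaconLevel n k \ firstSubcolumns) ≤ 2 ^ r * 3⁻¹ ^ (n + r) := by
  induction r generalizing n k with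
  | zero =>
    rw [pow_zero, one_mul, add_zero, ← volume_chaconLevel n k]
    exact measure_mono sdiff_subset
  | succ r ih =>
    have hlt (j : Fin 3) : k + copyShift n j < chaconH (n + 1) := by
      have := add_copyShift_add_chaconH_lt hk j
      omega
    calc volume (chaconLevel n k \ firstSubcolumns)
        ≤ 2 ^ r * 3⁻¹ ^ (n + 1 + r) + 2 ^ r * 3⁻¹ ^ (n + 1 + r) :=
          (measure_mono (chaconLevel_diff_firstSubcolumns_subset hk)).trans
            ((measure_union_le _ _).trans (add_le_add (ih (hlt 1)) (ih (hlt 2))))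
      _ = 2 ^ (r + 1) * 3⁻¹ ^ (n + (r + 1)) := by
          rw [← two_mul, ← mul_assoc, ← pow_succ', add_right_comm, add_assoc]

theorem volume_chaconLevel_diff_firstSubcolumns {n k : ℕ} (hk : k < chaconH n) :
    volume (chaconLevel n k \ firstSubcolumns) = 0 := by
  have hlim : Tendsto (fun r : ℕ => (3⁻¹ ^ n * (2 * 3⁻¹) ^ r : ℝ≥0∞)) atTop (𝓝 0) := by
    have hlt : (2 * 3⁻¹ : ℝ≥0∞) < 1 := by
      rw [← div_eq_mul_inv]
      exact ENNReal.div_lt_of_lt_mul (by norm_num)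
    simpa only [mul_zero] using ENNReal.Tendsto.const_mul
      (ENNReal.tendsto_pow_atTop_nhds_zero_of_lt_one hlt) (Or.inr (by simp))
  refine le_antisymm (ge_of_tendsto' hlim fun r => ?_) zero_le
  calc volume (chaconLevel n k \ firstSubcolumns) ≤ 2 ^ r * 3⁻¹ ^ (n + r) :=
        volume_chaconLevel_diff_firstSubcolumns_le r hk
    _ = 3⁻¹ ^ n * (2 * 3⁻¹) ^ r := by ring

theorem ae_mem_firstSubcolumns : ∀ᵐ x : ChaconX ∂chaconMu, (x : ℝ) ∈ firstSubcolumns := by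
  have hnull : volume (⋃ p : {p : ℕ × ℕ // p.2 < chaconH p.1},
      chaconLevel p.1.1 p.1.2 \ firstSubcolumns) = 0 :=
    measure_iUnion_null fun p => volume_chaconLevel_diff_firstSubcolumns p.2
  have hae : ∀ᵐ x ∂volume.restrict (Ici (0 : ℝ)), x ∈ firstSubcolumns := by
    rw [ae_restrict_iff' measurableSet_Ici]
    filter_upwards [measure_eq_zero_iff_ae_notMem.1 hnull] with x hx hx0
    obtain ⟨n, -, k, hk, hxk⟩ := exists_mem_chaconLevel hx0 0
    by_contra hfirst
    exact hx (mem_iUnion.2 ⟨⟨(n, k), hk⟩, hxk, hfirst⟩)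
  exact (ae_restrict_iff_subtype measurableSet_Ici).1 hae

theorem chaconMu_base : chaconMu base = 1 := by
  have himage : ((↑) : ChaconX → ℝ) '' base = Ico 0 1 := by
    ext x
    exact ⟨fun ⟨y, hy, hyx⟩ => hyx ▸ ⟨y.2, hy⟩, fun hx => ⟨⟨x, hx.1⟩, hx.2, rfl⟩⟩
  rw [chaconMu, comap_subtype_coe_apply measurableSet_Ici, himage, Real.volume_Ico, sub_zero,
    ENNReal.ofReal_one]

instance : SigmaFinite chaconMu := by
  refine SigmaFinite.of_map chaconMu measurable_subtype_coe.aemeasurable ?_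
  rw [chaconMu, map_comap_subtype_coe measurableSet_Ici]
  infer_instance

/-! ### Comparison of two factor maps -/

theorem measure_preimage_base_le {Z : Type*} [MeasurableSpace Z] {m : Measure Z} [SigmaFinite m]
    {U : Z → Z} (hU : MeasurePreserving U m m) {f g : Z → ChaconX}
    (hf : Measure.QuasiMeasurePreserving f m chaconMu) (hg : Measurable g)
    (hfU : Semiconj f U chaconT) (hgU : Semiconj g U chaconT) :
    m (g ⁻¹' base) ≤ m (f ⁻¹' base) := by
  have hvisits {e : Z → ChaconX} (heU : Semiconj e U chaconT) (l : ℕ) (z : Z) :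
      birkhoffSum U ((e ⁻¹' base).indicator (1 : Z → ℝ)) l z = baseVisits l (e z) :=
    birkhoffSum_of_semiconj heU (base.indicator 1) l z
  refine measure_le_of_ae_exists_birkhoffSum_indicator_le hU (hf.measurable measurableSet_base)
    (hg measurableSet_base) ?_
  filter_upwards [hf.ae ae_mem_firstSubcolumns] with z ⟨n, k, hk, hz⟩
  refine ⟨chaconH n, ?_⟩
  rw [hvisits hfU, hvisits hgU, baseVisits_chaconH_eq hk hz]
  exact ⟨baseVisits_chaconH_le n (g z), by positivity⟩

end Chacon

/-- **Proposition.**  For any `α ∈ (0,∞]` with `α ≠ 1`, there is no joining between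
`(X, μ, T)` and `(X, αμ, T)`. -/
theorem chacon_no_joining_alpha (α : ℝ≥0∞) (hα0 : 0 < α) (hα1 : α ≠ 1) :
    ¬ ∃ m : Measure (ChaconX × ChaconX),
        m.map (Prod.map chaconT chaconT) = m ∧
        m.map Prod.fst = chaconMu ∧ m.map Prod.snd = α • chaconMu := by
  rintro ⟨m, hm, hfst, hsnd⟩
  have hU : MeasurePreserving (Prod.map chaconT chaconT) m m :=
    ⟨Chacon.measurable_chaconT.prodMap Chacon.measurable_chaconT, hm⟩
  have : SigmaFinite m :=
    SigmaFinite.of_map m measurable_fst.aemeasurable (hfst ▸ inferInstance)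
  have hqfst : Measure.QuasiMeasurePreserving Prod.fst m chaconMu :=
    ⟨measurable_fst, hfst.absolutelyContinuous⟩
  have hqsnd : Measure.QuasiMeasurePreserving Prod.snd m chaconMu :=
    ⟨measurable_snd, hsnd ▸ Measure.smul_absolutelyContinuous⟩
  have hmeasure : m (Prod.snd ⁻¹' Chacon.base) = m (Prod.fst ⁻¹' Chacon.base) :=
    le_antisymm
      (Chacon.measure_preimage_base_le hU hqfst measurable_snd (fun _ => rfl) fun _ => rfl)
      (Chacon.measure_preimage_base_le hU hqsnd measurable_fst (fun _ => rfl) fun _ => rfl)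
  rw [← Measure.map_apply measurable_snd Chacon.measurableSet_base, hsnd,
    ← Measure.map_apply measurable_fst Chacon.measurableSet_base, hfst, Measure.smul_apply,
    Chacon.chaconMu_base, smul_eq_mul, mul_one] at hmeasure
  exact hα1 hmeasure
end
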